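/- arXiv:1911.11016 — 3 statements merged into one kernel-verified Lean document; each statement's English description precedes it below -/
import Mathlib

section
/- Let n ≥ 1 be an integer, let t > 0 and set q = e^{−t}. Then the Rips magnitude function of the cycle graph C_n satisfies |tC_n|_Rips = Σ_r (n/r)·q^{(n/r)·((r−1)/2)}·(1 − q) + q^{⌊n/2⌋}, where the sum is over all odd divisors r of n with r ≠ n. -/
open scoped BigOperators Real

/-- The Rips magnitude function of a finite subset `A` of a metric space:
`|tA|_Rips = Σ_{∅ ≠ B ⊆ A} (−1)^{#B−1} e^{−diam(B)·t}`. -/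
noncomputable def ripsMag {Y : Type*} [MetricSpace Y] (A : Finset Y) (t : ℝ) : ℝ :=
  ∑ B ∈ A.powerset.filter (fun B => B.Nonempty),
    (-1 : ℝ) ^ (B.card - 1) * Real.exp (-(Metric.diam (B : Set Y)) * t)


open scoped Classical in
/-- The vertex set of the cycle graph `C_n`, realised as the `n` points
`0, 1, …, n−1` in `ℝ/nℤ`; the induced metric is the shortest-path metric
`d(i,j) = min(|i−j|, n−|i−j|)`. -/
noncomputable def cycleGraph (n : ℕ) : Finset (AddCircle (n : ℝ)) :=
  (Finset.range n).image (fun j => ((j : ℝ) : AddCircle (n : ℝ)))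

/-- A set of residues modulo `n` has pairwise cyclic distances at most `k` precisely when no
difference of two of its members is congruent to an integer strictly between `k` and `n - k`. -/
def IsCyclicClique (n k : ℕ) (B : Finset (ZMod n)) : Prop :=
  ∀ x y : ℤ, (x : ZMod n) ∈ B → (y : ZMod n) ∈ B → (k : ℤ) < x - y → ¬ x - y < n - k

open scoped Classical in
/-- The elements `a` of `B` for which `a + 1` can be toggled without leaving the cliques of radius
`k`, and which come first (in the positive direction) in their run. -/
noncomputable def toggleStarts (n k : ℕ) [NeZero n] (B : Finset (ZMod n)) : Finset (ZMod n) :=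
  Finset.univ.filter fun a => a ∈ B ∧ a - k ∉ B ∧
    ∃ i : ℕ, a - (i + 1 : ℕ) - k - 1 ∈ B ∧ ∀ j ≤ i, a - (j + 1 : ℕ) ∉ B

section cliques

variable {n k : ℕ} {B C : Finset (ZMod n)}

lemma IsCyclicClique.mono (hC : IsCyclicClique n k C) (h : B ⊆ C) : IsCyclicClique n k B :=
  fun x y hx hy => hC x y (h hx) (h hy)

lemma IsCyclicClique.add_notMem (hB : IsCyclicClique n k B) (hk : 2 * k + 2 ≤ n) {a : ZMod n}
    (ha : a ∈ B) : a + k + 1 ∉ B := by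
  obtain ⟨x, rfl⟩ := ZMod.intCast_surjective a
  intro h
  exact hB (x + k + 1) x (by push_cast; exact h) ha (by omega) (by omega)

lemma IsCyclicClique.insert_add_one (hB : IsCyclicClique n k B) {a : ZMod n}
    (ha : a ∈ B) (hak : a - k ∉ B) : IsCyclicClique n k (insert (a + 1) B) := by
  intro x y hx hy h1 h2
  rw [Finset.mem_insert] at hx hy
  rcases hx with hx | hx <;> rcases hy with hy | hy
  · have : ((x - y : ℤ) : ZMod n) = 0 := by push_cast; rw [hx, hy]; ring
    rw [ZMod.intCast_zmod_eq_zero_iff_dvd] at this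
    have := Int.le_of_dvd (by omega) this
    omega
  · have hx' : ((x - 1 : ℤ) : ZMod n) = a := by push_cast; rw [hx]; ring
    by_cases h : (k : ℤ) < x - 1 - y
    · exact hB (x - 1) y (hx' ▸ ha) hy h (by omega)
    · refine hak ?_
      have : y = x - 1 - k := by omega
      rw [this] at hy
      push_cast at hy hx'
      rwa [hx'] at hy
  · have hy' : ((y - 1 : ℤ) : ZMod n) = a := by push_cast; rw [hy]; ring
    by_cases h : x - (y - 1) < n - k
    · exact hB x (y - 1) hx (hy' ▸ ha) (by omega) h
    · refine hak ?_
      have : x = y - 1 + n - k := by omega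
      rw [this] at hx
      push_cast at hx hy'
      rwa [hy', ZMod.natCast_self, add_zero] at hx
  · exact hB x y hx hy h1 h2

variable [NeZero n]

lemma mem_toggleStarts {a : ZMod n} : a ∈ toggleStarts n k B ↔ a ∈ B ∧ a - k ∉ B ∧
    ∃ i : ℕ, a - (i + 1 : ℕ) - k - 1 ∈ B ∧ ∀ j ≤ i, a - (j + 1 : ℕ) ∉ B := by
  simp [toggleStarts]

/-- Removing the successor of an element of `B` from a clique does not destroy the run starts. -/
lemma mem_toggleStarts_of_insert (hk : 2 * k + 2 ≤ n) {a x : ZMod n} (ha : a ∈ B)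
    (hB : IsCyclicClique n k B) (hx : x ∈ toggleStarts n k (insert (a + 1) B)) :
    x ∈ toggleStarts n k B := by
  rw [mem_toggleStarts] at hx ⊢
  obtain ⟨h1, h2, i, h3, h4⟩ := hx
  have hxa : x ≠ a + 1 := by
    rintro rfl
    have := h4 0 (Nat.zero_le _)
    apply this
    simp [ha]
  refine ⟨(Finset.mem_insert.1 h1).resolve_left hxa, fun h => h2 (Finset.mem_insert_of_mem h), ?_⟩
  rcases Finset.mem_insert.1 h3 with h3 | h3
  · refine ⟨i + 1, ?_, fun j hj => ?_⟩
    · have : x - ((i + 1 + 1 : ℕ) : ZMod n) - k - 1 = a := by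
        push_cast at h3 ⊢
        linear_combination h3
      rwa [this]
    · rcases Nat.lt_or_ge i j with h | h
      · obtain rfl : j = i + 1 := by omega
        have : x - ((i + 1 + 1 : ℕ) : ZMod n) = a + k + 1 := by
          push_cast at h3 ⊢
          linear_combination h3
        rw [this]
        exact hB.add_notMem hk ha
      · exact fun h' => h4 j h (Finset.mem_insert_of_mem h')
  · exact ⟨i, h3, fun j hj h' => h4 j hj (Finset.mem_insert_of_mem h')⟩

lemma toggleStarts_insert (hk : 2 * k + 2 ≤ n) {a : ZMod n}
    (hB : IsCyclicClique n k B) (ha : a ∈ toggleStarts n k B) :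
    toggleStarts n k (insert (a + 1) B) = toggleStarts n k B := by
  obtain ⟨ha1, ha2, -⟩ := mem_toggleStarts.1 ha
  ext x
  refine ⟨mem_toggleStarts_of_insert hk ha1 hB, fun hx => ?_⟩
  rw [mem_toggleStarts] at hx ⊢
  obtain ⟨h1, h2, i, h3, h4⟩ := hx
  refine ⟨Finset.mem_insert_of_mem h1, ?_, i, Finset.mem_insert_of_mem h3, fun j hj => ?_⟩
  · rw [Finset.mem_insert, not_or]
    refine ⟨fun h => hB.add_notMem hk ha1 ?_, h2⟩
    rwa [show a + k + 1 = x by linear_combination -h]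
  · rw [Finset.mem_insert, not_or]
    refine ⟨fun h => ?_, h4 j hj⟩
    rcases hj.lt_or_eq with hj | rfl
    · apply h4 (j + 1) hj
      rwa [show x - ((j + 1 + 1 : ℕ) : ZMod n) = a by push_cast at h ⊢; linear_combination h]
    · apply ha2
      rwa [show a - (k : ZMod n) = x - ((j + 1 : ℕ) : ZMod n) - k - 1 by
        push_cast at h ⊢; linear_combination -h]

/-- Toggling the successor of a member of `toggleStarts` preserves cliques and `toggleStarts`. -/
lemma IsCyclicClique.symmDiff_add_one (hk : 2 * k + 2 ≤ n) {a : ZMod n}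
    (hB : IsCyclicClique n k B) (ha : a ∈ toggleStarts n k B) :
    IsCyclicClique n k (symmDiff B {a + 1}) ∧
      toggleStarts n k (symmDiff B {a + 1}) = toggleStarts n k B := by
  obtain ⟨ha1, ha2, -⟩ := mem_toggleStarts.1 ha
  have : Fact (1 < n) := ⟨by omega⟩
  by_cases h : a + 1 ∈ B
  · have e : symmDiff B {a + 1} = B.erase (a + 1) := by
      ext x; by_cases hx : x = a + 1 <;> simp [Finset.mem_symmDiff, hx, h]
    have e' : insert (a + 1) (B.erase (a + 1)) = B := Finset.insert_erase h
    have hB' := hB.mono (Finset.erase_subset (a + 1) B)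
    have ha' : a ∈ B.erase (a + 1) := Finset.mem_erase.2 ⟨by simp, ha1⟩
    rw [e]
    refine ⟨hB', ?_⟩
    have := mem_toggleStarts_of_insert hk ha' hB' (e'.symm ▸ ha)
    have := toggleStarts_insert hk hB' this
    rw [← this, e']
  · have e : symmDiff B {a + 1} = insert (a + 1) B := by
      ext x; by_cases hx : x = a + 1 <;> simp [Finset.mem_symmDiff, hx, h]
    rw [e]
    exact ⟨hB.insert_add_one ha1 ha2, toggleStarts_insert hk hB ha⟩

/-- A clique without run starts that can be toggled is invariant under translation by `-k`. -/
lemma IsCyclicClique.sub_mem (hk : 2 * k + 2 ≤ n) (hB : IsCyclicClique n k B)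
    (hF : toggleStarts n k B = ∅) {a : ZMod n} (ha : a ∈ B) : a - k ∈ B := by
  by_contra hak
  have key : ∀ i : ℕ, a - i - k ∉ B := by
    intro i
    induction i using Nat.strong_induction_on with
    | _ i ih =>
    rcases Nat.eq_zero_or_pos i with rfl | hi
    · simpa using hak
    obtain ⟨i, rfl⟩ := Nat.exists_eq_add_of_lt hi
    simp only [zero_add] at *
    classical
    let P : ℕ → Prop := fun j => a - j ∈ B
    have hP0 : P 0 := by simpa [P] using ha
    set j := Nat.findGreatest P i with hj
    have hPj : P j := Nat.findGreatest_spec (Nat.zero_le i) hP0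
    have hji : j ≤ i := Nat.findGreatest_le i
    have hbk := ih j (by omega)
    have hgap : ∀ l, j < l → l ≤ i → a - l ∉ B := fun l h1 h2 => Nat.findGreatest_is_greatest h1 h2
    intro hmem
    rcases hji.lt_or_eq with hlt | heq
    · have : a - j ∈ toggleStarts n k B := by
        rw [mem_toggleStarts]
        refine ⟨hPj, hbk, i - j - 1, ?_, fun l hl => ?_⟩
        · have : i - j - 1 + 1 = i - j := by omega
          rw [this, Nat.cast_sub hji]
          push_cast at hmem
          convert hmem using 1
          ring
        · have := hgap (j + (l + 1)) (by omega) (by omega)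
          convert this using 2
          push_cast
          ring
      simp [hF] at this
    · apply hB.add_notMem hk hmem
      have : a - ((i + 1 : ℕ) : ZMod n) - k + k + 1 = a - j := by rw [heq]; push_cast; ring
      rw [this]
      exact hPj
  apply key (n - k)
  rw [Nat.cast_sub (by omega)]
  simpa using ha

open scoped Classical in
lemma sum_cliques_eq_sum_invariant (hk : 2 * k + 2 ≤ n) :
    ∑ B : Finset (ZMod n) with B.Nonempty ∧ IsCyclicClique n k B, (-1 : ℝ) ^ (B.card + 1) =
    ∑ B : Finset (ZMod n) with (B.Nonempty ∧ IsCyclicClique n k B) ∧ toggleStarts n k B = ∅,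
      (-1 : ℝ) ^ (B.card + 1) := by
  have : Fact (1 < n) := ⟨by omega⟩
  let pick : Finset (ZMod n) → ZMod n := fun X => if h : X.Nonempty then h.choose else 0
  have hpick : ∀ X : Finset (ZMod n), X ≠ ∅ → pick X ∈ X := by
    intro X hX
    have hX := Finset.nonempty_iff_ne_empty.2 hX
    simp only [pick, hX, dif_pos]
    exact hX.choose_spec
  rw [← Finset.sum_filter_add_sum_filter_not _ (fun B => toggleStarts n k B = ∅),
    Finset.filter_filter, Finset.filter_filter, add_eq_left]
  let g : Finset (ZMod n) → Finset (ZMod n) := fun B =>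
    symmDiff B {pick (toggleStarts n k B) + 1}
  refine Finset.sum_involution (fun B _ => g B) ?_ ?_ ?_ ?_
  · intro B hB
    simp only [g]
    set c := pick (toggleStarts n k B) + 1
    by_cases h : c ∈ B
    · have e : symmDiff B {c} = B.erase c := by
        ext x; by_cases hx : x = c <;> simp [Finset.mem_symmDiff, hx, h]
      rw [e, ← Finset.card_erase_add_one h, pow_succ _ ((B.erase c).card + 1)]
      ring
    · have e : symmDiff B {c} = insert c B := by
        ext x; by_cases hx : x = c <;> simp [Finset.mem_symmDiff, hx, h]
      rw [e, Finset.card_insert_of_notMem h, pow_succ _ (B.card + 1)]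
      ring
  · intro B hB _ h
    simp [g] at h
  · intro B hB
    simp only [Finset.mem_filter, Finset.mem_univ, true_and] at hB ⊢
    obtain ⟨⟨-, h2⟩, h3⟩ := hB
    have ha := hpick _ h3
    obtain ⟨h4, h5⟩ := h2.symmDiff_add_one hk ha
    refine ⟨⟨?_, h4⟩, by simpa only [g, h5] using h3⟩
    rw [← h5] at ha
    exact ⟨_, (mem_toggleStarts.1 ha).1⟩
  · intro B hB
    simp only [Finset.mem_filter, Finset.mem_univ, true_and] at hB
    obtain ⟨⟨-, h2⟩, h3⟩ := hB
    obtain ⟨-, h5⟩ := h2.symmDiff_add_one hk (hpick _ h3)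
    simp only [g, h5, symmDiff_symmDiff_cancel_right]

end cliques

/-- The residues modulo `n` congruent to `j` modulo a divisor `m` of `n`. -/
def residueClass (n m j : ℕ) : Finset (ZMod n) :=
  (Finset.range (n / m)).image fun i => ((j + m * i : ℕ) : ZMod n)

section residueClass

variable {n m j : ℕ}

lemma add_mul_lt_of_lt_div {i : ℕ} (hj : j < m) (hi : i < n / m) : j + m * i < n := by
  have h1 : m * (i + 1) ≤ m * (n / m) := Nat.mul_le_mul_left m hi
  have h2 := Nat.mul_div_le n m
  rw [mul_add] at h1
  omega

lemma intCast_mem_residueClass [NeZero n] (hmn : m ∣ n) (hj : j < m) (z : ℤ) :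
    (z : ZMod n) ∈ residueClass n m j ↔ z % m = j := by
  have hn : 0 < n := Nat.pos_of_neZero n
  simp only [residueClass, Finset.mem_image, Finset.mem_range]
  constructor
  · rintro ⟨i, -, h⟩
    have h' : (((j + m * i : ℕ) : ℤ) : ZMod n) = z := by rw [← h]; simp
    rw [ZMod.intCast_eq_intCast_iff] at h'
    have h'' := h'.of_dvd (show (m : ℤ) ∣ n by exact_mod_cast hmn)
    rw [← h'']
    push_cast
    rw [Int.add_mul_emod_self_left]
    exact Int.emod_eq_of_lt (by omega) (by omega)
  · intro h
    have h0 := Int.emod_nonneg z (show (n : ℤ) ≠ 0 by omega)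
    have h1 := Int.emod_lt_of_pos z (show (0 : ℤ) < n by omega)
    obtain ⟨w, hw⟩ := Int.eq_ofNat_of_zero_le h0
    have hw' : w % m = j := by
      have : (w : ℤ) % m = j := by
        rw [← h, ← hw]
        exact Int.emod_emod_of_dvd z (by exact_mod_cast hmn)
      exact_mod_cast this
    refine ⟨w / m, Nat.div_lt_div_of_lt_of_dvd hmn (by omega), ?_⟩
    rw [← hw', Nat.mod_add_div]
    have : ((w : ℤ) : ZMod n) = z := by
      rw [← hw, ZMod.intCast_mod]
    simpa using this

lemma card_residueClass (hj : j < m) : (residueClass n m j).card = n / m := by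
  rw [residueClass, Finset.card_image_of_injOn, Finset.card_range]
  intro a ha b hb h
  simp only [Finset.coe_range, Set.mem_Iio] at ha hb
  have h := (ZMod.natCast_eq_natCast_iff' _ _ _).1 h
  rw [Nat.mod_eq_of_lt (add_mul_lt_of_lt_div hj ha),
    Nat.mod_eq_of_lt (add_mul_lt_of_lt_div hj hb)] at h
  exact Nat.eq_of_mul_eq_mul_left (by omega) (Nat.add_left_cancel h)

end residueClass

section invariant

variable {n k : ℕ} {B : Finset (ZMod n)}

lemma dvd_of_sub_two_mul_dvd (hk : 2 * k + 2 ≤ n) (hd : n - 2 * k ∣ k) : n - 2 * k ∣ n := by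
  have := (dvd_refl (n - 2 * k)).add (hd.mul_left 2)
  rwa [Nat.sub_add_cancel (by omega)] at this

variable [NeZero n]

/-- A set of residues invariant under translation by `-k` is invariant under translation by
multiples of `n - 2 * k`. -/
lemma intCast_add_mul_mem (hk : 2 * k + 2 ≤ n) (hsub : ∀ a ∈ B, a - k ∈ B) (i : ℤ) {z : ℤ}
    (hz : (z : ZMod n) ∈ B) : ((z + (n - 2 * k : ℕ) * i : ℤ) : ZMod n) ∈ B := by
  have hmul : ∀ (i : ℕ) {z : ℤ}, (z : ZMod n) ∈ B → ((z - i * k : ℤ) : ZMod n) ∈ B := by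
    intro i z hz
    induction i with
    | zero => simpa using hz
    | succ i ih =>
      convert hsub _ ih using 1
      push_cast
      ring
  have hmul' : ∀ (i : ℤ) {z : ℤ}, (z : ZMod n) ∈ B → ((z + i * k : ℤ) : ZMod n) ∈ B := by
    intro i z hz
    have hn : (n : ℤ) ≠ 0 := by exact_mod_cast NeZero.ne n
    have h0 := Int.emod_nonneg (-i) hn
    obtain ⟨w, hw⟩ := Int.eq_ofNat_of_zero_le h0
    have := hmul w hz
    have h1 : ((w : ℤ) : ZMod n) = -i := by rw [← hw, ZMod.intCast_mod]; simp
    push_cast at this h1 ⊢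
    rw [h1] at this
    convert this using 1
    ring
  convert hmul' (-2 * i) hz using 1
  rw [Nat.cast_sub (by omega)]
  push_cast
  simp
  ring

/-- Differences of members of a `k`-invariant clique are multiples of `n - 2 * k`, up to the
shift `k`. -/
lemma IsCyclicClique.dvd_sub_sub (hk : 2 * k + 2 ≤ n) (hB : IsCyclicClique n k B)
    (hsub : ∀ a ∈ B, a - k ∈ B) {x y : ℤ} (hx : (x : ZMod n) ∈ B) (hy : (y : ZMod n) ∈ B) :
    ((n - 2 * k : ℕ) : ℤ) ∣ x - y - k := by
  set m : ℤ := ((n - 2 * k : ℕ) : ℤ) with hm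
  have hm' : m = n - 2 * k := by omega
  have h0 := Int.emod_nonneg (x - y - k) (show m ≠ 0 by omega)
  have h1 := Int.emod_lt_of_pos (x - y - k) (show 0 < m by omega)
  have h2 := Int.emod_add_mul_ediv (x - y - k) m
  by_contra hdvd
  rw [Int.dvd_iff_emod_eq_zero] at hdvd
  refine hB (x + m * (-((x - y - k) / m))) y (intCast_add_mul_mem hk hsub _ hx) hy ?_ ?_ <;> rw [mul_neg] <;> omega

lemma isCyclicClique_residueClass {j : ℕ} (hk : 2 * k + 2 ≤ n) (hd : n - 2 * k ∣ k)
    (hj : j < n - 2 * k) : IsCyclicClique n k (residueClass n (n - 2 * k) j) := by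
  have hmn := dvd_of_sub_two_mul_dvd hk hd
  intro x y hx hy h1 h2
  rw [intCast_mem_residueClass hmn hj] at hx hy
  have h3 : ((n - 2 * k : ℕ) : ℤ) ∣ x - y - k :=
    (Int.ModEq.dvd (hy.trans hx.symm)).sub (by exact_mod_cast hd)
  have := Int.le_of_dvd (by omega) h3
  omega

lemma toggleStarts_residueClass {j : ℕ} (hk : 2 * k + 2 ≤ n) (hd : n - 2 * k ∣ k)
    (hj : j < n - 2 * k) : toggleStarts n k (residueClass n (n - 2 * k) j) = ∅ := by
  have hmn := dvd_of_sub_two_mul_dvd hk hd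
  rw [Finset.eq_empty_iff_forall_notMem]
  intro a ha
  obtain ⟨h1, h2, -⟩ := mem_toggleStarts.1 ha
  obtain ⟨x, rfl⟩ := ZMod.intCast_surjective a
  apply h2
  have : (x : ZMod n) - k = ((x - k : ℤ) : ZMod n) := by push_cast; rfl
  rw [this]
  rw [intCast_mem_residueClass hmn hj] at h1 ⊢
  rw [← h1]
  exact Int.modEq_iff_dvd.2 (by simpa using Int.natCast_dvd_natCast.2 hd)

open scoped Classical in
/-- The Euler characteristic of the clique complex of the `k`-th power of a cycle of length `n`. -/
lemma sum_cliques (hk : 2 * k + 2 ≤ n) :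
    ∑ B : Finset (ZMod n) with B.Nonempty ∧ IsCyclicClique n k B, (-1 : ℝ) ^ (B.card + 1) =
    if n - 2 * k ∣ k then ((n - 2 * k : ℕ) : ℝ) else 0 := by
  rw [sum_cliques_eq_sum_invariant hk]
  split_ifs with hd
  · have hmn := dvd_of_sub_two_mul_dvd hk hd
    have hodd : Odd (n / (n - 2 * k)) := by
      obtain ⟨l, hl⟩ := hd
      refine ⟨l, Nat.div_eq_of_eq_mul_right (by omega) ?_⟩
      have : (n - 2 * k) * (2 * l + 1) = 2 * ((n - 2 * k) * l) + (n - 2 * k) := by ring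
      omega
    have himg : (Finset.univ.filter fun B : Finset (ZMod n) =>
        (B.Nonempty ∧ IsCyclicClique n k B) ∧ toggleStarts n k B = ∅) =
        (Finset.range (n - 2 * k)).image (residueClass n (n - 2 * k)) := by
      ext B
      simp only [Finset.mem_filter, Finset.mem_univ, true_and, Finset.mem_image, Finset.mem_range]
      constructor
      · rintro ⟨⟨⟨a, ha⟩, h2⟩, h3⟩
        have hsub : ∀ a ∈ B, a - k ∈ B := fun a ha => h2.sub_mem hk h3 ha
        obtain ⟨x, rfl⟩ := ZMod.intCast_surjective a
        have h0 := Int.emod_nonneg x (show ((n - 2 * k : ℕ) : ℤ) ≠ 0 by omega)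
        have h1 := Int.emod_lt_of_pos x (show (0 : ℤ) < (n - 2 * k : ℕ) by omega)
        obtain ⟨j, hj⟩ := Int.eq_ofNat_of_zero_le h0
        have hjm : j < n - 2 * k := by omega
        refine ⟨j, hjm, ?_⟩
        ext b
        obtain ⟨y, rfl⟩ := ZMod.intCast_surjective b
        rw [intCast_mem_residueClass hmn hjm]
        constructor
        · intro h
          obtain ⟨i, hi⟩ := Int.ModEq.dvd (hj.trans h.symm)
          have := intCast_add_mul_mem hk hsub i ha
          rwa [← hi, add_sub_cancel] at this
        · intro h
          have h4 := (h2.dvd_sub_sub hk hsub h ha).add (Int.natCast_dvd_natCast.2 hd)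
          rw [sub_add_cancel] at h4
          rw [← hj]
          exact (Int.modEq_iff_dvd.2 h4).symm
      · rintro ⟨j, hj, rfl⟩
        refine ⟨⟨?_, isCyclicClique_residueClass hk hd hj⟩, toggleStarts_residueClass hk hd hj⟩
        rw [← Finset.card_pos, card_residueClass hj]
        exact hodd.pos
    rw [himg, Finset.sum_image]
    · rw [Finset.sum_congr rfl (g := fun _ => (1 : ℝ)), Finset.sum_const, Finset.card_range,
        nsmul_one]
      intro j hj
      rw [card_residueClass (Finset.mem_range.1 hj)]
      exact hodd.add_one.neg_one_pow
    · intro i hi j hj h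
      simp only [Finset.coe_range, Set.mem_Iio] at hi hj
      have := (intCast_mem_residueClass hmn hi i).2 (Int.emod_eq_of_lt (by omega) (by omega))
      rw [h, intCast_mem_residueClass hmn hj, Int.emod_eq_of_lt (by omega) (by omega)] at this
      exact_mod_cast this
  · rw [Finset.sum_eq_zero]
    intro B hB
    simp only [Finset.mem_filter, Finset.mem_univ, true_and] at hB
    obtain ⟨⟨⟨a, ha⟩, h2⟩, h3⟩ := hB
    obtain ⟨x, rfl⟩ := ZMod.intCast_surjective a
    have := h2.dvd_sub_sub hk (fun a ha => h2.sub_mem hk h3 ha) ha ha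
    rw [sub_self, zero_sub, dvd_neg] at this
    exact absurd (by exact_mod_cast this) hd

end invariant

/-- The diameter of a set of residues modulo `n` for the cyclic distance. -/
def cyclicDiam (n : ℕ) (B : Finset (ZMod n)) : ℕ :=
  (B ×ˢ B).sup fun p => (p.1 - p.2).valMinAbs.natAbs

/-- The inclusion of `ℤ/nℤ` into `ℝ/nℤ`. -/
noncomputable def zmodToCircle (n : ℕ) (a : ZMod n) : AddCircle (n : ℝ) :=
  ((a.val : ℝ) : AddCircle (n : ℝ))

section circle

variable {n : ℕ}

lemma coe_intCast_addCircle_eq_zero {z : ℤ} (h : (n : ℤ) ∣ z) :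
    (((z : ℤ) : ℝ) : AddCircle (n : ℝ)) = 0 := by
  obtain ⟨w, rfl⟩ := h
  rw [AddCircle.coe_eq_zero_iff]
  exact ⟨w, by push_cast; rw [zsmul_eq_mul]; ring⟩

variable [NeZero n]

lemma dist_zmodToCircle (a b : ZMod n) :
    dist (zmodToCircle n a) (zmodToCircle n b) = (a - b).valMinAbs.natAbs := by
  have hn : (0 : ℝ) < n := by exact_mod_cast Nat.pos_of_neZero n
  have h : zmodToCircle n a - zmodToCircle n b = (((a - b).valMinAbs : ℝ) : AddCircle (n : ℝ)) := by
    rw [← sub_eq_zero, zmodToCircle, zmodToCircle, ← AddCircle.coe_sub, ← AddCircle.coe_sub]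
    have : (n : ℤ) ∣ (a.val - b.val - (a - b).valMinAbs : ℤ) := by
      rw [← ZMod.intCast_zmod_eq_zero_iff_dvd]
      simp
    simpa using coe_intCast_addCircle_eq_zero this
  rw [dist_eq_norm, h, (AddCircle.norm_coe_eq_abs_iff _ hn.ne').2, Nat.cast_natAbs, Int.cast_abs]
  have := (a - b).natAbs_valMinAbs_le
  rw [abs_of_pos hn, ← Int.cast_abs, ← Nat.cast_natAbs, le_div_iff₀ two_pos]
  exact_mod_cast by omega

lemma zmodToCircle_injective : Function.Injective (zmodToCircle n) := by
  intro a b h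
  rw [← dist_eq_zero, dist_zmodToCircle] at h
  rw [← sub_eq_zero]
  simpa using h

open scoped Classical in
lemma cycleGraph_eq_image : cycleGraph n = Finset.univ.image (zmodToCircle n) := by
  ext x
  simp only [cycleGraph, zmodToCircle, Finset.mem_image, Finset.mem_univ, true_and,
    Finset.bind_def, Finset.pure_def, Finset.mem_sup, Finset.mem_range, Finset.mem_singleton]
  constructor
  · rintro ⟨_, ⟨j, hj, rfl⟩, rfl⟩
    exact ⟨j, by rw [ZMod.val_natCast, Nat.mod_eq_of_lt hj]⟩
  · rintro ⟨a, rfl⟩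
    exact ⟨a.val, ⟨a.val, a.val_lt, rfl⟩, rfl⟩

lemma diam_image_zmodToCircle (B : Finset (ZMod n)) :
    Metric.diam (zmodToCircle n '' B) = cyclicDiam n B := by
  apply le_antisymm
  · apply Metric.diam_le_of_forall_dist_le (Nat.cast_nonneg _)
    rintro _ ⟨a, ha, rfl⟩ _ ⟨b, hb, rfl⟩
    rw [dist_zmodToCircle, Nat.cast_le]
    exact Finset.le_sup (f := fun p : ZMod n × ZMod n => (p.1 - p.2).valMinAbs.natAbs)
      (Finset.mk_mem_product ha hb)
  · rcases B.eq_empty_or_nonempty with rfl | hB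
    · simp [cyclicDiam]
    · obtain ⟨p, hp, h⟩ := Finset.exists_mem_eq_sup _ (hB.product hB)
        fun p : ZMod n × ZMod n => (p.1 - p.2).valMinAbs.natAbs
      rw [Finset.mem_product] at hp
      rw [cyclicDiam, h, ← dist_zmodToCircle]
      exact Metric.dist_le_diam_of_mem (B.finite_toSet.image _).isBounded
        (Set.mem_image_of_mem _ hp.1) (Set.mem_image_of_mem _ hp.2)

lemma cyclicDiam_le_half (B : Finset (ZMod n)) : cyclicDiam n B ≤ n / 2 :=
  Finset.sup_le fun p _ => (p.1 - p.2).natAbs_valMinAbs_le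

lemma isCyclicClique_iff {k : ℕ} (B : Finset (ZMod n)) :
    IsCyclicClique n k B ↔ cyclicDiam n B ≤ k := by
  have hn := Nat.pos_of_neZero n
  simp only [IsCyclicClique, cyclicDiam, Finset.sup_le_iff, Finset.mem_product, Prod.forall]
  constructor
  · rintro h a b ⟨ha, hb⟩
    rw [ZMod.valMinAbs_natAbs_eq_min]
    obtain ⟨y, rfl⟩ := ZMod.intCast_surjective b
    have hlt := (a - (y : ZMod n)).val_lt
    have := h ((a - (y : ZMod n)).val + y) y (by simpa using ha) hb
    omega
  · intro h x y hx hy h1 h2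
    have := h x y ⟨hx, hy⟩
    rw [ZMod.valMinAbs_natAbs_eq_min] at this
    have hv : (((x : ZMod n) - y).val : ℤ) = x - y := by
      rw [← Int.cast_sub, ZMod.val_intCast]
      exact Int.emod_eq_of_lt (by omega) (by omega)
    omega

lemma ripsMag_cycleGraph_eq_sum (t : ℝ) : ripsMag (cycleGraph n) t =
    ∑ B : Finset (ZMod n) with B.Nonempty,
      (-1 : ℝ) ^ (B.card + 1) * Real.exp (-t) ^ cyclicDiam n B := by
  classical
  rw [ripsMag]
  symm
  refine Finset.sum_bij (fun B _ => B.image (zmodToCircle n)) ?_ ?_ ?_ ?_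
  · intro B hB
    simp only [Finset.mem_filter, Finset.mem_univ, true_and] at hB
    rw [Finset.mem_filter, Finset.mem_powerset, cycleGraph_eq_image]
    exact ⟨Finset.image_subset_image (Finset.subset_univ B), hB.image _⟩
  · intro B _ C _ h
    exact Finset.image_injective zmodToCircle_injective h
  · intro D hD
    rw [Finset.mem_filter, Finset.mem_powerset, cycleGraph_eq_image, Finset.subset_image_iff] at hD
    obtain ⟨⟨B, -, rfl⟩, h⟩ := hD
    exact ⟨B, by simpa using h, rfl⟩
  · intro B hB
    simp only [Finset.mem_filter, Finset.mem_univ, true_and] at hB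
    rw [Finset.card_image_of_injective _ zmodToCircle_injective, Finset.coe_image,
      diam_image_zmodToCircle, ← Real.exp_nat_mul]
    congr 1
    · obtain ⟨c, hc⟩ := Nat.exists_eq_succ_of_ne_zero hB.card_ne_zero
      rw [hc, Nat.succ_sub_one, Nat.succ_eq_add_one, pow_succ, pow_succ]
      ring
    · congr 1
      ring

end circle

lemma sum_nonempty_neg_one_pow_card {α : Type*} [Fintype α] [DecidableEq α] [Nonempty α] :
    ∑ B : Finset α with B.Nonempty, (-1 : ℝ) ^ (B.card + 1) = 1 := by
  have h := Finset.sum_powerset_neg_one_pow_card_of_nonempty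
    (Finset.univ_nonempty (α := α))
  rw [Finset.powerset_univ] at h
  have h' : ∑ B : Finset α, (-1 : ℝ) ^ B.card = 0 := by exact_mod_cast h
  rw [← Finset.sum_filter_add_sum_filter_not _ (fun B : Finset α => B.Nonempty)] at h'
  simp only [Finset.not_nonempty_iff_eq_empty, Finset.filter_eq', Finset.mem_univ, if_true,
    Finset.sum_singleton, Finset.card_empty, pow_zero] at h'
  simp only [pow_succ, mul_neg, mul_one, Finset.sum_neg_distrib]
  linarith

lemma pow_eq_sum_add_pow (q : ℝ) {d h : ℕ} (hd : d ≤ h) :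
    q ^ d = ∑ k ∈ Finset.range h, (if d ≤ k then q ^ k * (1 - q) else 0) + q ^ h := by
  induction h, hd using Nat.le_induction with
  | base =>
    rw [Finset.sum_eq_zero, zero_add]
    intro k hk
    rw [if_neg (by simpa using hk)]
  | succ h hd ih =>
    rw [Finset.sum_range_succ, if_pos hd, ih]
    ring

/-- for `n ≥ 1`, `t > 0` and `q = e^{−t}`,
`|tC_n|_Rips = Σ_{odd r ∣ n, r ≠ n} (n/r) q^{(n/r)((r−1)/2)} (1 − q) + q^{⌊n/2⌋}`. -/
theorem ripsMag_cycleGraph (n : ℕ) (hn : 1 ≤ n) (t : ℝ) (ht : 0 < t) :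
    ripsMag (cycleGraph n) t =
      (∑ r ∈ n.divisors.filter (fun r => Odd r ∧ r ≠ n),
        ((n / r : ℕ) : ℝ) * Real.exp (-t) ^ ((n / r) * ((r - 1) / 2)) *
          (1 - Real.exp (-t)))
      + Real.exp (-t) ^ (n / 2) := by
  classical
  have : NeZero n := ⟨by omega⟩
  rw [ripsMag_cycleGraph_eq_sum]
  set q := Real.exp (-t)
  simp only [pow_eq_sum_add_pow q (cyclicDiam_le_half _), mul_add, Finset.mul_sum]
  rw [Finset.sum_add_distrib, ← Finset.sum_mul, sum_nonempty_neg_one_pow_card, one_mul,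
    Finset.sum_comm]
  congr 1
  have hχ : ∀ k ∈ Finset.range (n / 2), ∑ B : Finset (ZMod n) with B.Nonempty,
      (-1 : ℝ) ^ (B.card + 1) * (if cyclicDiam n B ≤ k then q ^ k * (1 - q) else 0) =
      if n - 2 * k ∣ k then ((n - 2 * k : ℕ) : ℝ) * q ^ k * (1 - q) else 0 := by
    intro k hk
    rw [Finset.mem_range] at hk
    have := sum_cliques (n := n) (k := k) (by omega)
    simp only [mul_ite, mul_zero, ← isCyclicClique_iff]
    rw [← Finset.sum_filter, Finset.filter_filter, ← Finset.sum_mul, this]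
    split_ifs <;> ring
  rw [Finset.sum_congr rfl hχ, ← Finset.sum_filter]
  symm
  have hdiv : ∀ r ∈ n.divisors.filter (fun r => Odd r ∧ r ≠ n), ∃ d l, 2 ≤ d ∧ r = 2 * l + 1 ∧
      n = d * (2 * l + 1) ∧ n / r = d ∧ (r - 1) / 2 = l ∧ n - 2 * (d * l) = d := by
    intro r hr
    rw [Finset.mem_filter, Nat.mem_divisors] at hr
    obtain ⟨⟨⟨d, hd⟩, -⟩, ⟨l, hl⟩, hrn⟩ := hr
    have hd0 : d ≠ 0 := by rintro rfl; omega
    have hd1 : d ≠ 1 := by rintro rfl; omega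
    have hnd : n = d * (2 * l + 1) := by rw [hd, hl, mul_comm]
    refine ⟨d, l, by omega, hl, hnd, Nat.div_eq_of_eq_mul_right (by omega) hd, by omega, ?_⟩
    have : d * (2 * l + 1) = 2 * (d * l) + d := by ring
    omega
  have hmem : ∀ k ∈ (Finset.range (n / 2)).filter (fun k => n - 2 * k ∣ k), ∃ d l, 2 ≤ d ∧
      k = d * l ∧ n - 2 * k = d ∧ n = d * (2 * l + 1) ∧ n / (n - 2 * k) = 2 * l + 1 := by
    intro k hk
    rw [Finset.mem_filter, Finset.mem_range] at hk
    obtain ⟨hk, l, hl⟩ := hk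
    have hnd : n = (n - 2 * k) * (2 * l + 1) := by
      have : (n - 2 * k) * (2 * l + 1) = 2 * ((n - 2 * k) * l) + (n - 2 * k) := by ring
      omega
    exact ⟨n - 2 * k, l, by omega, hl, rfl, hnd, Nat.div_eq_of_eq_mul_right (by omega) hnd⟩
  refine Finset.sum_bij' (fun r _ => (n / r) * ((r - 1) / 2)) (fun k _ => n / (n - 2 * k))
    ?_ ?_ ?_ ?_ ?_
  · intro r hr
    obtain ⟨d, l, hd, hr, hnd, h1, h2, h3⟩ := hdiv r hr
    rw [Finset.mem_filter, Finset.mem_range, h1, h2, h3]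
    exact ⟨by omega, Dvd.intro l rfl⟩
  · intro k hk
    obtain ⟨d, l, hd, -, -, hnd, h⟩ := hmem k hk
    rw [Finset.mem_filter, Nat.mem_divisors, h]
    exact ⟨⟨Dvd.intro_left d hnd.symm, by omega⟩, odd_two_mul_add_one l, by nlinarith⟩
  · intro r hr
    obtain ⟨d, l, hd, hr, hnd, h1, h2, h3⟩ := hdiv r hr
    rw [h1, h2, h3, hr]
    exact Nat.div_eq_of_eq_mul_right (by omega) hnd
  · intro k hk
    obtain ⟨d, l, hd, hkl, -, hnd, h⟩ := hmem k hk
    rw [h, hkl, Nat.div_eq_of_eq_mul_left (by omega) hnd]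
    congr 1
    omega
  · intro r hr
    obtain ⟨d, l, -, -, -, h1, h2, h3⟩ := hdiv r hr
    rw [h1, h2, h3]
end

section
/- Let n ≥ 1 be an integer and t > 0. Then the Rips magnitude function of the Euclidean cycle C_n^eucl satisfies |tC_n^eucl|_Rips = Σ_r (n/r)·(e^{−δ_r·t} − e^{−δ_{r,n}·t}) + e^{−δ_n·t}, where the sum is over all odd divisors r of n with r ≠ n. -/
open scoped BigOperators Real

/-- The Euclidean cycle `C_n^eucl`: `n` equally spaced points on the unit circle
in `ℝ² = ℂ`, with the Euclidean metric. -/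
noncomputable def euclCycle (n : ℕ) : Finset ℂ :=
  (Finset.range n).image
    (fun k : ℕ => Complex.exp (2 * (π : ℂ) * (k : ℂ) / (n : ℂ) * Complex.I))

/-- `δ_m = 2 sin(π ⌊m/2⌋ / m)`, the diameter of `C_m^eucl`. -/
noncomputable def deltaE (m : ℕ) : ℝ := 2 * Real.sin (π * ((m / 2 : ℕ) : ℝ) / (m : ℝ))

/-- `δ_{m,n} = 2 sin(π (1/n + ⌊m/2⌋/m))`. -/
noncomputable def deltaE2 (m n : ℕ) : ℝ :=
  2 * Real.sin (π * (1 / (n : ℝ) + ((m / 2 : ℕ) : ℝ) / (m : ℝ)))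

namespace CyclicClique

variable {n : ℕ}

/-- The number of forward steps from `a` to `b` on the cycle `ZMod n`. -/
def fwd (a b : ZMod n) : ℕ := (b - a).val

@[simp] lemma fwd_self (a : ZMod n) : fwd a a = 0 := by simp [fwd]

lemma eq_of_fwd_eq_zero {a b : ZMod n} (h : fwd a b = 0) : a = b := by
  rw [fwd, ZMod.val_eq_zero, sub_eq_zero] at h
  exact h.symm

lemma fwd_add_natCast (a : ZMod n) {j : ℕ} (hj : j < n) : fwd a (a + j) = j := by
  simp [fwd, ZMod.val_natCast_of_lt hj]

lemma fwd_sub_natCast (a : ZMod n) {j : ℕ} (hj : j < n) : fwd (a - (j : ZMod n)) a = j := by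
  simp [fwd, ZMod.val_natCast_of_lt hj]

/-- All pairwise cyclic distances in `A` are at most `k`. -/
def IsCyclicClique (k : ℕ) (A : Finset (ZMod n)) : Prop :=
  ∀ a ∈ A, ∀ b ∈ A, fwd a b ≤ k ∨ fwd b a ≤ k

/-- `a` is the element of `A` farthest ahead of `b` within `k` forward steps. -/
def IsFarthest (k : ℕ) (A : Finset (ZMod n)) (b a : ZMod n) : Prop :=
  a ∈ A ∧ fwd b a ≤ k ∧ ∀ c ∈ A, fwd b c ≤ k → fwd b c ≤ fwd b a

open Classical in
/-- The elements of `A` that are farthest ahead of some element of `A`. -/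
noncomputable def tips (k : ℕ) (A : Finset (ZMod n)) : Finset (ZMod n) :=
  A.filter fun a => ∃ b ∈ A, IsFarthest k A b a

lemma mem_tips {k : ℕ} {A : Finset (ZMod n)} {a : ZMod n} :
    a ∈ tips k A ↔ ∃ b ∈ A, IsFarthest k A b a := by
  simp only [tips, Finset.mem_filter, and_iff_right_iff_imp]
  rintro ⟨b, -, h⟩
  exact h.1

lemma tips_subset (k : ℕ) (A : Finset (ZMod n)) : tips k A ⊆ A := by
  classical
  exact Finset.filter_subset _ _

lemma exists_isFarthest (k : ℕ) {A : Finset (ZMod n)} {b : ZMod n} (hb : b ∈ A) :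
    ∃ a, IsFarthest k A b a := by
  classical
  obtain ⟨a, ha, hmax⟩ := (A.filter fun c => fwd b c ≤ k).exists_max_image (fwd b)
    ⟨b, by simp [hb]⟩
  simp only [Finset.mem_filter] at ha hmax
  exact ⟨a, ha.1, ha.2, fun c hc h => hmax c ⟨hc, h⟩⟩

variable {k : ℕ} {A : Finset (ZMod n)} {a : ZMod n}

lemma IsCyclicClique.subset {B : Finset (ZMod n)} (hA : IsCyclicClique k A) (h : B ⊆ A) :
    IsCyclicClique k B :=
  fun a ha b hb => hA a (h ha) b (h hb)

/-- The largest cyclic distance between two elements of `A`. -/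
def cyclicDiam (A : Finset (ZMod n)) : ℕ :=
  (A ×ˢ A).sup fun p => min (fwd p.1 p.2) (fwd p.2 p.1)

lemma cyclicDiam_le_iff : cyclicDiam A ≤ k ↔ IsCyclicClique k A := by
  simp only [cyclicDiam, Finset.sup_le_iff, Finset.mem_product, min_le_iff, Prod.forall, and_imp]
  exact ⟨fun h a ha b hb => h a b ha hb, fun h a b ha hb => h a ha b hb⟩

lemma exists_min_fwd_eq_cyclicDiam (hA : A.Nonempty) :
    ∃ a ∈ A, ∃ b ∈ A, min (fwd a b) (fwd b a) = cyclicDiam A := by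
  obtain ⟨p, hp, h⟩ := (A ×ˢ A).exists_mem_eq_sup (hA.product hA)
    fun p => min (fwd p.1 p.2) (fwd p.2 p.1)
  rw [Finset.mem_product] at hp
  exact ⟨p.1, hp.1, p.2, hp.2, h.symm⟩

section CyclicOrder

variable [NeZero n]

lemma fwd_lt (a b : ZMod n) : fwd a b < n := ZMod.val_lt _

lemma fwd_add (a b c : ZMod n) :
    fwd a b + fwd b c = fwd a c ∨ fwd a b + fwd b c = fwd a c + n := by
  have h : fwd a c = (fwd a b + fwd b c) % n := by
    rw [fwd, fwd, fwd, ← ZMod.val_add]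
    congr 1
    ring
  have h1 := fwd_lt a b
  have h2 := fwd_lt b c
  rcases lt_or_ge (fwd a b + fwd b c) n with h3 | h3
  · rw [Nat.mod_eq_of_lt h3] at h
    omega
  · rw [Nat.mod_eq_sub_mod h3, Nat.mod_eq_of_lt (by omega)] at h
    omega

lemma add_natCast_fwd (a b : ZMod n) : a + (fwd a b : ℕ) = b := by
  simp [fwd]

lemma IsCyclicClique.insert_sub (hk : 2 * k < n) (hA : IsCyclicClique k A)
    (ha : a ∈ tips k A) : IsCyclicClique k (insert (a - k) A) := by
  obtain ⟨b, hb, -, hba, hmax⟩ := mem_tips.1 ha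
  have hva := fwd_sub_natCast a (show k < n by omega)
  generalize a - (k : ZMod n) = v at *
  have key : ∀ c ∈ A, fwd v c ≤ k ∨ fwd c v ≤ k := by
    intro c hc
    have h1 := hA b hb c hc
    have h2 := hmax c hc
    have h3 := fwd_add v b a
    have h4 := fwd_add v b c
    have h5 := fwd_add c v b
    have h6 := fwd_add b c b
    have := fwd_lt v b
    have := fwd_lt v c
    have := fwd_lt c v
    have := fwd_lt b c
    have := fwd_lt c b
    rw [fwd_self] at h6
    omega
  intro x hx y hy
  rcases Finset.mem_insert.1 hx with rfl | hx' <;>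
    rcases Finset.mem_insert.1 hy with rfl | hy'
  · simp
  · exact key y hy'
  · exact (key x hx').symm
  · exact hA x hx' y hy'

lemma tips_insert_sub (hk : 2 * k < n) (hA : IsCyclicClique k A)
    (ha : a ∈ tips k A) (hv : a - k ∉ A) : tips k (insert (a - k) A) = tips k A := by
  obtain ⟨b, hb, haA, hba, hmax⟩ := mem_tips.1 ha
  have hva := fwd_sub_natCast a (show k < n by omega)
  generalize a - (k : ZMod n) = v at *
  have hvb := fwd_add v b a
  have hvb' := fwd_lt v b
  have hne : ∀ c ∈ A, fwd v c ≠ 0 := fun c hc h => hv (eq_of_fwd_eq_zero h ▸ hc)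
  have hfar : ∀ c ∈ A, fwd c v ≤ k → fwd c b ≤ k ∧ fwd c v < fwd c b := by
    intro c hc hcv
    have h1 := hA b hb c hc
    have h2 := hmax c hc
    have h3 := fwd_add v b c
    have h4 := fwd_add c v b
    have h5 := fwd_add v c v
    have := hne b hb
    have := hne c hc
    have := fwd_lt v c
    have := fwd_lt b c
    have := fwd_lt c b
    rw [fwd_self] at h5
    omega
  ext x
  rw [mem_tips, mem_tips]
  constructor
  · rintro ⟨c, hc, hxA, hcx, hm⟩
    rcases Finset.mem_insert.1 hc with rfl | hc'
    · have h1 := hm a (by simp [haA]) hva.le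
      have h2 := fwd_add c a x
      have h3 : fwd a x = 0 := by have := fwd_lt a x; omega
      rw [← eq_of_fwd_eq_zero h3]
      exact ⟨b, hb, haA, hba, hmax⟩
    · rcases Finset.mem_insert.1 hxA with rfl | hxA'
      · obtain ⟨h1, h2⟩ := hfar c hc' hcx
        have h3 := hm b (by simp [hb]) h1
        omega
      · exact ⟨c, hc', hxA', hcx, fun d hd => hm d (by simp [hd])⟩
  · rintro ⟨c, hc, hxA, hcx, hm⟩
    refine ⟨c, by simp [hc], by simp [hxA], hcx, fun d hd hcd => ?_⟩
    rcases Finset.mem_insert.1 hd with rfl | hd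
    · obtain ⟨h1, h2⟩ := hfar c hc hcd
      exact h2.le.trans (hm b hb h1)
    · exact hm d hd hcd

lemma tips_erase_sub (hk : 2 * k < n) (hA : IsCyclicClique k A)
    (ha : a ∈ tips k A) (hvA : a - k ∈ A) (hv : a - k ∉ tips k A) :
    tips k (A.erase (a - k)) = tips k A := by
  have haA := tips_subset k A ha
  have hva := fwd_sub_natCast a (show k < n by omega)
  generalize a - (k : ZMod n) = v at *
  have hav : a ≠ v := by rintro rfl; exact hv ha
  obtain ⟨b, hb, hbmin⟩ := (A.erase v).exists_min_image (fwd v) ⟨a, by simp [haA, hav]⟩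
  simp only [Finset.mem_erase] at hb hbmin
  have hvb : fwd v b ≠ 0 := fun h => hb.1 (eq_of_fwd_eq_zero h).symm
  have hba := hbmin a ⟨hav, haA⟩
  have hfar : IsFarthest k A b a := by
    have h1 := fwd_add v b a
    have h1' := fwd_lt b a
    have h1'' := fwd_lt v b
    refine ⟨haA, by omega, fun c hc hbc => ?_⟩
    by_contra! hlt
    have h2 := fwd_add v b c
    have h3 := fwd_lt v c
    have h4 := fwd_lt b c
    have hcv : fwd c v ≤ k := by
      have h5 := hA v hvA c hc
      omega
    have hnot : ∃ d ∈ A, fwd c d ≤ k ∧ fwd c v < fwd c d := by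
      by_contra! h
      exact hv (mem_tips.2 ⟨c, hc, hvA, hcv, h⟩)
    obtain ⟨d, hd, hcd, hvd⟩ := hnot
    have hdv : d ≠ v := by rintro rfl; omega
    have h6 := hbmin d ⟨hdv, hd⟩
    have h7 := fwd_add c v d
    have h8 := fwd_add c v b
    have h9 := fwd_add b c b
    have := fwd_lt c b
    have := fwd_lt v d
    rw [fwd_self] at h9
    have h10 := fwd_add v c v
    rw [fwd_self] at h10
    omega
  ext x
  rw [mem_tips, mem_tips]
  constructor
  · rintro ⟨c, hc, hxA, hcx, hm⟩
    replace hc := (Finset.mem_erase.1 hc).2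
    obtain ⟨y, hy⟩ := exists_isFarthest k hc
    have hyv : y ≠ v := by
      rintro rfl
      exact hv (mem_tips.2 ⟨c, hc, hy⟩)
    have h1 := hm y (Finset.mem_erase.2 ⟨hyv, hy.1⟩) hy.2.1
    exact ⟨c, hc, (Finset.mem_erase.1 hxA).2, hcx, fun d hd hcd => (hy.2.2 d hd hcd).trans h1⟩
  · rintro ⟨c, hc, hx⟩
    have hxv : x ≠ v := by
      rintro rfl
      exact hv (mem_tips.2 ⟨c, hc, hx⟩)
    have hfin : ∀ c ∈ A, c ≠ v → IsFarthest k A c x →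
        ∃ b ∈ A.erase v, IsFarthest k (A.erase v) b x := fun c hc hcv hx =>
      ⟨c, Finset.mem_erase.2 ⟨hcv, hc⟩, Finset.mem_erase.2 ⟨hxv, hx.1⟩, hx.2.1,
        fun d hd => hx.2.2 d (Finset.mem_of_mem_erase hd)⟩
    rcases eq_or_ne c v with rfl | hcv
    · have h1 := hx.2.2 a haA hva.le
      have h2 := hx.2.1
      have h3 := fwd_add c a x
      have h4 : fwd a x = 0 := by have := fwd_lt a x; omega
      obtain rfl := eq_of_fwd_eq_zero h4
      exact hfin b hb.2 hb.1 hfar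
    · exact hfin c hc hcv hx

/-- The tips of `A` are closed under the shift by `-k`. -/
def IsRigid (k : ℕ) (A : Finset (ZMod n)) : Prop :=
  ∀ a ∈ tips k A, a - k ∈ tips k A

lemma IsRigid.eq_tips (hk : 2 * k < n) (hA : IsCyclicClique k A) (h : IsRigid k A) :
    tips k A = A := by
  refine (tips_subset k A).antisymm fun b hb => ?_
  obtain ⟨a, ha⟩ := exists_isFarthest k hb
  have hv := h a (mem_tips.2 ⟨b, hb, ha⟩)
  obtain ⟨haA, hba, hmax⟩ := ha
  have hva := fwd_sub_natCast a (show k < n by omega)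
  generalize a - (k : ZMod n) = v at *
  have hvA := tips_subset k A hv
  obtain ⟨c, hc, -, hcv, hcmax⟩ := mem_tips.1 hv
  have hvb : fwd v b = 0 := by
    have h1 := hA b hb c hc
    have h2 := hmax c hc
    have h3 := hcmax b hb
    have h4 := fwd_add v b a
    have h5 := fwd_add c v b
    have h6 := fwd_add v b c
    have h7 := fwd_add v c v
    have := fwd_lt v b
    have := fwd_lt v c
    have := fwd_lt c b
    have := fwd_lt b c
    rw [fwd_self] at h7
    omega
  rwa [← eq_of_fwd_eq_zero hvb]

lemma add_natCast_mem_of_sub_mem {B : Finset (ZMod n)} (h : ∀ b ∈ B, b - k ∈ B) {b : ZMod n}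
    (hb : b ∈ B) : b + k ∈ B := by
  have hit : ∀ j : ℕ, b - j * k ∈ B := by
    intro j
    induction j with
    | zero => simpa using hb
    | succ j ih =>
      convert h _ ih using 1
      push_cast
      ring
  convert hit (n - 1) using 1
  rw [Nat.cast_sub (NeZero.one_le), ZMod.natCast_self]
  push_cast
  ring

/-- The residue class of `i` modulo `m`, as a subset of `ZMod n`. -/
def residueClass (n : ℕ) [NeZero n] (m i : ℕ) : Finset (ZMod n) :=
  Finset.univ.filter fun x => x.val % m = i

lemma mem_residueClass {m i : ℕ} {x : ZMod n} : x ∈ residueClass n m i ↔ x.val % m = i := by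
  simp [residueClass]

lemma val_mod_eq_iff_dvd_fwd {m : ℕ} (hm : m ∣ n) (a x : ZMod n) :
    x.val % m = a.val % m ↔ m ∣ fwd a x := by
  have h := fwd_add 0 a x
  simp only [fwd, sub_zero] at h
  have hmod : (a.val + fwd a x) ≡ x.val [MOD m] := by
    rcases h with h | h
    · exact congrArg (· % m) h
    · refine (congrArg (· % m) h).trans ?_
      obtain ⟨q, rfl⟩ := hm
      simp
  constructor
  · intro hx
    have h1 : a.val + fwd a x ≡ a.val + 0 [MOD m] := hmod.trans hx
    exact (Nat.modEq_zero_iff_dvd).1 (Nat.ModEq.add_left_cancel' _ h1)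
  · intro hd
    have h1 : a.val + fwd a x ≡ a.val + 0 [MOD m] :=
      Nat.ModEq.add_left _ ((Nat.modEq_zero_iff_dvd).2 hd)
    exact hmod.symm.trans h1

lemma IsRigid.exists_eq_residueClass (hk : 2 * k < n) (hA : IsCyclicClique k A)
    (hne : A.Nonempty) (h : IsRigid k A) :
    (n - 2 * k) ∣ k ∧ ∃ i < n - 2 * k, A = residueClass n (n - 2 * k) i := by
  have hsub : ∀ b ∈ A, b - k ∈ A := by
    have h1 := h
    rwa [IsRigid, h.eq_tips hk hA] at h1
  have hadd : ∀ b ∈ A, b + k ∈ A := fun b hb => add_natCast_mem_of_sub_mem hsub hb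
  set m := n - 2 * k with hm
  have hcast : (m : ZMod n) = -k - k := by
    rw [hm, Nat.cast_sub hk.le, ZMod.natCast_self]
    push_cast
    ring
  have haddm : ∀ b ∈ A, b + m ∈ A := by
    intro b hb
    convert hsub _ (hsub b hb) using 1
    rw [hcast]
    ring
  have hsubm : ∀ b ∈ A, b - m ∈ A := by
    intro b hb
    convert hadd _ (hadd b hb) using 1
    rw [hcast]
    ring
  have hgap : ∀ a ∈ A, ∀ x ∈ A, fwd a x < m → fwd a x = 0 := by
    intro a ha x hx hlt
    have h1 := hA _ (hsub a ha) x hx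
    have h2 := fwd_sub_natCast a (show k < n by omega)
    generalize a - (k : ZMod n) = v at *
    have h3 := fwd_add v a x
    have h4 := fwd_add v x v
    have := fwd_lt v x
    have := fwd_lt x v
    rw [fwd_self] at h4
    omega
  obtain ⟨a, ha⟩ := hne
  have hdvd : ∀ N, ∀ x ∈ A, fwd a x = N → m ∣ N := by
    intro N
    induction N using Nat.strong_induction_on with
    | _ N ih =>
      intro x hx hN
      rcases lt_or_ge N m with hlt | hge
      · rw [← hN, hgap a ha x hx (hN ▸ hlt)]
        exact dvd_zero _
      · rcases eq_or_ne m n with hmn | hmn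
        · have := fwd_lt a x
          omega
        have h1 := fwd_sub_natCast x (show m < n by omega)
        have h2 := fwd_add a (x - (m : ZMod n)) x
        have h3 := fwd_lt a (x - (m : ZMod n))
        have h4 := ih (N - m) (by omega) _ (hsubm x hx) (by omega)
        exact (Nat.dvd_sub_iff_left hge dvd_rfl).1 h4
  have hmk : m ∣ k := hdvd k _ (hadd a ha) (fwd_add_natCast a (by omega))
  have hmn : m ∣ n := by
    have h1 : n = m + 2 * k := by omega
    rw [h1]
    exact dvd_add dvd_rfl (hmk.mul_left 2)
  refine ⟨hmk, a.val % m, Nat.mod_lt _ (by omega), ?_⟩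
  ext x
  rw [mem_residueClass, val_mod_eq_iff_dvd_fwd hmn]
  refine ⟨fun hx => hdvd _ x hx rfl, fun ⟨j, hj⟩ => ?_⟩
  have hit : ∀ j : ℕ, a + ((m * j : ℕ) : ZMod n) ∈ A := by
    intro j
    induction j with
    | zero => simpa using ha
    | succ j ih =>
      convert haddm _ ih using 1
      push_cast
      ring
  rw [← add_natCast_fwd a x, hj]
  exact hit j

lemma sub_dvd_self {n k : ℕ} (hk : 2 * k < n) (hd : (n - 2 * k) ∣ k) : (n - 2 * k) ∣ n := by
  have h1 : n = (n - 2 * k) + 2 * k := by omega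
  conv_rhs => rw [h1]
  exact dvd_add dvd_rfl (hd.mul_left 2)

lemma card_residueClass {m i : ℕ} (hm : m ∣ n) (hi : i < m) :
    (residueClass n m i).card = n / m := by
  obtain ⟨q, hq⟩ := hm
  have hm0 : 0 < m := by omega
  have hdiv : n / m = q := by rw [hq, Nat.mul_div_cancel_left _ hm0]
  rw [hdiv]
  have hval : ∀ j < q, ((i + m * j : ℕ) : ZMod n).val = i + m * j := by
    intro j hj
    apply ZMod.val_natCast_of_lt
    nlinarith
  rw [← Finset.card_range q]
  refine Finset.card_nbij' (fun x => x.val / m) (fun j => ((i + m * j : ℕ) : ZMod n)) ?_ ?_ ?_ ?_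
  · intro x _
    have := ZMod.val_lt x
    simpa using Nat.div_lt_of_lt_mul (by omega)
  · intro j hj
    simp only [Finset.coe_range, Set.mem_Iio] at hj
    simp only [Finset.mem_coe, mem_residueClass]
    rw [hval j hj, Nat.add_mul_mod_self_left, Nat.mod_eq_of_lt hi]
  · intro x hx
    simp only [Finset.mem_coe, mem_residueClass] at hx
    simp only
    rw [← hx, Nat.mod_add_div, ZMod.natCast_zmod_val]
  · intro j hj
    simp only [Finset.coe_range, Set.mem_Iio] at hj
    simp only
    rw [hval j hj, Nat.add_mul_div_left _ _ hm0, Nat.div_eq_of_lt hi, zero_add]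

lemma odd_card_residueClass {i : ℕ} (hk : 2 * k < n) (hd : (n - 2 * k) ∣ k)
    (hi : i < n - 2 * k) :
    Odd (residueClass n (n - 2 * k) i).card := by
  rw [card_residueClass (sub_dvd_self hk hd) hi]
  obtain ⟨l, hl⟩ := hd
  have h1 : n = (n - 2 * k) * (2 * l + 1) := by
    rw [mul_add, mul_left_comm, ← hl]
    omega
  refine ⟨l, Nat.div_eq_of_eq_mul_right (by omega) h1⟩

lemma isCyclicClique_residueClass {i : ℕ} (hk : 2 * k < n) (hd : (n - 2 * k) ∣ k) :
    IsCyclicClique k (residueClass n (n - 2 * k) i) := by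
  intro a ha b hb
  rw [mem_residueClass] at ha hb
  have h1 := (val_mod_eq_iff_dvd_fwd (sub_dvd_self hk hd) a b).1 (hb.trans ha.symm)
  have h2 := fwd_add a b a
  rw [fwd_self] at h2
  by_contra! hlt
  have h3 : (n - 2 * k) ∣ fwd a b - k := Nat.dvd_sub h1 hd
  have := Nat.le_of_dvd (by omega) h3
  omega

lemma isRigid_residueClass {i : ℕ} (hk : 2 * k < n) (hd : (n - 2 * k) ∣ k) :
    IsRigid k (residueClass n (n - 2 * k) i) := by
  have hmem : ∀ a b : ZMod n, fwd a b = k →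
      (a ∈ residueClass n (n - 2 * k) i ↔ b ∈ residueClass n (n - 2 * k) i) := by
    intro a b hab
    rw [mem_residueClass, mem_residueClass,
      (val_mod_eq_iff_dvd_fwd (sub_dvd_self hk hd) a b).2 (hab ▸ hd)]
  intro a ha
  have hkn : k < n := by omega
  have h0 := (hmem _ _ (fwd_sub_natCast a hkn)).2 (tips_subset _ _ ha)
  have h1 := fwd_sub_natCast (a - (k : ZMod n)) hkn
  exact mem_tips.2 ⟨_, (hmem _ _ h1).2 h0, h0, h1.le, fun c _ hc => h1.symm ▸ hc⟩

open Classical in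
/-- The Euler characteristic of the clique complex of the `k`-th power of the `n`-cycle. -/
theorem sum_cyclicClique (hk : 2 * k < n) :
    ∑ A ∈ (Finset.univ : Finset (Finset (ZMod n))) with A.Nonempty ∧ IsCyclicClique k A,
      (-1 : ℝ) ^ (A.card - 1) =
      if (n - 2 * k) ∣ k then ((n - 2 * k : ℕ) : ℝ) else 0 := by
  rw [← Finset.sum_filter_add_sum_filter_not _ (fun A => IsRigid k A)]
  have hzero : ∑ A ∈ (Finset.univ.filter fun A : Finset (ZMod n) =>
      A.Nonempty ∧ IsCyclicClique k A) with ¬ IsRigid k A, (-1 : ℝ) ^ (A.card - 1) = 0 := by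
    have hex : ∀ E : Finset (ZMod n), ∃ a, (∃ a ∈ E, a - (k : ZMod n) ∉ E) →
        a ∈ E ∧ a - (k : ZMod n) ∉ E := by
      intro E
      by_cases h : ∃ a ∈ E, a - (k : ZMod n) ∉ E
      · obtain ⟨a, ha⟩ := h
        exact ⟨a, fun _ => ha⟩
      · exact ⟨0, fun h' => absurd h' h⟩
    choose c hc using hex
    let g : Finset (ZMod n) → Finset (ZMod n) := fun A =>
      if c (tips k A) - k ∈ A then A.erase (c (tips k A) - k) else insert (c (tips k A) - k) A
    have hrigid : ∀ A : Finset (ZMod n), ¬ IsRigid k A →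
        c (tips k A) ∈ tips k A ∧ c (tips k A) - k ∉ tips k A := by
      intro A hA
      apply hc
      simpa [IsRigid] using hA
    have htips : ∀ A : Finset (ZMod n), IsCyclicClique k A → ¬ IsRigid k A →
        tips k (g A) = tips k A := by
      intro A hA hr
      obtain ⟨h1, h2⟩ := hrigid A hr
      simp only [g]
      split_ifs with h
      · exact tips_erase_sub hk hA h1 h h2
      · exact tips_insert_sub hk hA h1 h
    refine Finset.sum_involution (fun A _ => g A) ?_ ?_ ?_ ?_
    · intro A hA
      simp only [Finset.mem_filter, Finset.mem_univ, true_and] at hA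
      obtain ⟨h1, h2⟩ := hrigid A hA.2
      have hcard := Finset.card_pos.2 hA.1.1
      simp only [g]
      split_ifs with h
      · have h3 : 1 < A.card := Finset.one_lt_card.2
          ⟨_, tips_subset _ _ h1, _, h, fun h' => h2 (h' ▸ h1)⟩
        rw [Finset.card_erase_of_mem h]
        obtain ⟨j, hj⟩ : ∃ j, A.card = j + 2 := ⟨A.card - 2, by omega⟩
        simp [hj, pow_succ]
      · rw [Finset.card_insert_of_notMem h]
        obtain ⟨j, hj⟩ : ∃ j, A.card = j + 1 := ⟨A.card - 1, by omega⟩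
        simp [hj, pow_succ]
    · intro A _ _ heq
      simp only [g] at heq
      split_ifs at heq with h
      · exact (Finset.erase_eq_self.1 heq) h
      · exact h (Finset.insert_eq_self.1 heq)
    · intro A hA
      simp only [Finset.mem_filter, Finset.mem_univ, true_and] at hA ⊢
      obtain ⟨h1, h2⟩ := hrigid A hA.2
      have ht := htips A hA.1.2 hA.2
      refine ⟨⟨⟨c (tips k A), tips_subset k (g A) (ht ▸ h1)⟩, ?_⟩, ?_⟩
      · simp only [g]
        split_ifs with h
        · exact hA.1.2.subset (Finset.erase_subset _ _)
        · exact hA.1.2.insert_sub hk h1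
      · rw [IsRigid, ht]
        exact fun h => h2 (h _ h1)
    · intro A hA
      simp only [Finset.mem_filter, Finset.mem_univ, true_and] at hA
      have ht := htips A hA.1.2 hA.2
      by_cases h : c (tips k A) - k ∈ A
      · have hg : g A = A.erase (c (tips k A) - k) := by simp [g, h]
        conv_lhs => simp only [g, ht]
        change (if _ ∈ g A then (g A).erase _ else insert _ (g A)) = A
        rw [hg, if_neg (Finset.notMem_erase _ _), Finset.insert_erase h]
      · have hg : g A = insert (c (tips k A) - k) A := by simp [g, h]
        change (if c (tips k (g A)) - k ∈ g A then (g A).erase (c (tips k (g A)) - k)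
          else insert (c (tips k (g A)) - k) (g A)) = A
        rw [ht, hg, if_pos (Finset.mem_insert_self _ _), Finset.erase_insert h]
  rw [hzero, add_zero]
  split_ifs with hd
  · have himg : (Finset.univ.filter fun A : Finset (ZMod n) =>
        A.Nonempty ∧ IsCyclicClique k A).filter (fun A => IsRigid k A) =
        (Finset.range (n - 2 * k)).image (residueClass n (n - 2 * k)) := by
      ext A
      simp only [Finset.mem_filter, Finset.mem_univ, true_and, Finset.mem_image, Finset.mem_range]
      constructor
      · rintro ⟨⟨hne, hA⟩, hr⟩
        obtain ⟨-, i, hi, rfl⟩ := hr.exists_eq_residueClass hk hA hne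
        exact ⟨i, hi, rfl⟩
      · rintro ⟨i, hi, rfl⟩
        exact ⟨⟨Finset.card_pos.1 (odd_card_residueClass hk hd hi).pos,
          isCyclicClique_residueClass hk hd⟩, isRigid_residueClass hk hd⟩
    rw [himg, Finset.sum_image]
    · rw [Finset.sum_congr rfl (g := fun _ => (1 : ℝ))]
      · simp
      · intro i hi
        exact (Nat.Odd.sub_odd (odd_card_residueClass hk hd (Finset.mem_range.1 hi))
          odd_one).neg_one_pow
    · intro i hi j hj hij
      simp only [Finset.coe_range, Set.mem_Iio] at hi hj
      obtain ⟨x, hx⟩ := Finset.card_pos.1 (odd_card_residueClass hk hd hi).pos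
      have hx' := hx
      rw [hij] at hx'
      exact (mem_residueClass.1 hx).symm.trans (mem_residueClass.1 hx')
  · refine Finset.sum_eq_zero fun A hA => ?_
    simp only [Finset.mem_filter, Finset.mem_univ, true_and] at hA
    exact absurd (hA.2.exists_eq_residueClass hk hA.1.2 hA.1.1).1 hd

lemma isCyclicClique_of_le (h : n ≤ 2 * k + 1) : IsCyclicClique k A := by
  intro a _ b _
  have h1 := fwd_add a b a
  rw [fwd_self] at h1
  omega

lemma cyclicDiam_le_half : cyclicDiam A ≤ n / 2 :=
  cyclicDiam_le_iff.2 (isCyclicClique_of_le (by omega))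

end CyclicOrder

/-- The Euclidean distance between points of the regular `n`-gon that are `j` steps apart. -/
noncomputable def chord (n j : ℕ) : ℝ := 2 * Real.sin (π * j / n)

lemma chord_mono {i j : ℕ} (hij : i ≤ j) (hj : j ≤ n / 2) : chord n i ≤ chord n j := by
  rcases Nat.eq_zero_or_pos n with rfl | hn
  · simp [chord]
  have hn' : (0 : ℝ) < n := by exact_mod_cast hn
  have hij' : (i : ℝ) ≤ j := by exact_mod_cast hij
  have hjn : (2 * j : ℝ) ≤ n := by
    have : 2 * j ≤ n := by omega
    exact_mod_cast this
  have hpi := Real.pi_pos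
  refine mul_le_mul_of_nonneg_left (Real.sin_le_sin_of_le_of_le_pi_div_two ?_ ?_ ?_) zero_le_two
  · have : 0 ≤ π * i / n := by positivity
    linarith
  · rw [div_le_div_iff₀ hn' two_pos]
    nlinarith
  · gcongr

section Chord

variable [NeZero n]

lemma dist_stdAddChar (a b : ZMod n) :
    dist (ZMod.stdAddChar a) (ZMod.stdAddChar b) = chord n (fwd a b) := by
  have hn : (0 : ℝ) < n := by exact_mod_cast NeZero.pos n
  have h1 : (ZMod.stdAddChar b : ℂ) = ZMod.stdAddChar a * ZMod.stdAddChar (b - a) := by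
    rw [← AddChar.map_add_eq_mul, add_sub_cancel]
  have h2 : (ZMod.stdAddChar (b - a) : ℂ) =
      Complex.exp (Complex.I * ((2 * (π * fwd a b / n) : ℝ) : ℂ)) := by
    rw [ZMod.stdAddChar_apply, ZMod.toCircle_apply, fwd]
    push_cast
    ring_nf
  have h3 : ‖(ZMod.stdAddChar a : ℂ)‖ = 1 := by
    rw [ZMod.stdAddChar_apply]
    exact Circle.norm_coe _
  have h4 : 0 ≤ Real.sin (π * fwd a b / n) := by
    have hlt : (fwd a b : ℝ) ≤ n := by exact_mod_cast (fwd_lt a b).le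
    apply Real.sin_nonneg_of_nonneg_of_le_pi
    · have := Real.pi_pos
      positivity
    · rw [div_le_iff₀ hn]
      exact mul_le_mul_of_nonneg_left hlt Real.pi_pos.le
  rw [dist_comm, dist_eq_norm, h1, ← mul_sub_one, norm_mul, h3, one_mul, h2,
    Complex.norm_exp_I_mul_ofReal_sub_one, mul_div_cancel_left₀ _ two_ne_zero, Real.norm_eq_abs,
    abs_of_nonneg (by positivity), chord]

lemma dist_stdAddChar_eq_chord_min (a b : ZMod n) :
    dist (ZMod.stdAddChar a) (ZMod.stdAddChar b) = chord n (min (fwd a b) (fwd b a)) := by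
  rcases min_choice (fwd a b) (fwd b a) with h | h
  · rw [h, dist_stdAddChar]
  · rw [h, dist_comm, dist_stdAddChar]

lemma diam_image_stdAddChar {A : Finset (ZMod n)} (hA : A.Nonempty) :
    Metric.diam ((ZMod.stdAddChar : ZMod n → ℂ) '' A) = chord n (cyclicDiam A) := by
  have hle : ∀ a ∈ A, ∀ b ∈ A, min (fwd a b) (fwd b a) ≤ cyclicDiam A := fun a ha b hb =>
    min_le_iff.2 (cyclicDiam_le_iff.1 le_rfl a ha b hb)
  obtain ⟨a, ha, b, hb, hab⟩ := exists_min_fwd_eq_cyclicDiam hA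
  apply le_antisymm
  · apply Metric.diam_le_of_forall_dist_le
    · rw [← hab, ← dist_stdAddChar_eq_chord_min]
      exact dist_nonneg
    · rintro _ ⟨x, hx, rfl⟩ _ ⟨y, hy, rfl⟩
      rw [dist_stdAddChar_eq_chord_min]
      exact chord_mono (hle x hx y hy) cyclicDiam_le_half
  · rw [← hab, ← dist_stdAddChar_eq_chord_min]
    exact Metric.dist_le_diam_of_mem (A.finite_toSet.image _).isBounded
      (Set.mem_image_of_mem _ ha) (Set.mem_image_of_mem _ hb)

lemma euclCycle_eq_image :
    euclCycle n = (Finset.univ : Finset (ZMod n)).image ZMod.stdAddChar := by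
  ext z
  simp only [euclCycle, Finset.mem_image, Finset.mem_range, Finset.mem_univ, true_and]
  constructor
  · rintro ⟨j, -, rfl⟩
    refine ⟨j, ?_⟩
    rw [ZMod.stdAddChar_apply, ZMod.toCircle_natCast]
    ring_nf
  · rintro ⟨a, rfl⟩
    refine ⟨a.val, ZMod.val_lt a, ?_⟩
    rw [ZMod.stdAddChar_apply, ZMod.toCircle_apply]
    ring_nf

lemma ripsMag_euclCycle_eq_sum (t : ℝ) :
    ripsMag (euclCycle n) t = ∑ A ∈ (Finset.univ : Finset (Finset (ZMod n))) with A.Nonempty,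
      (-1 : ℝ) ^ (A.card - 1) * Real.exp (-(chord n (cyclicDiam A)) * t) := by
  have hinj : Function.Injective (ZMod.stdAddChar : ZMod n → ℂ) := ZMod.injective_stdAddChar
  rw [ripsMag, euclCycle_eq_image]
  symm
  refine Finset.sum_bij (fun A _ => A.image ZMod.stdAddChar) ?_ ?_ ?_ ?_
  · intro A hA
    simp only [Finset.mem_filter, Finset.mem_univ, true_and] at hA
    simp only [Finset.mem_filter, Finset.mem_powerset]
    exact ⟨Finset.image_subset_image (Finset.subset_univ _), hA.image _⟩
  · intro A _ B _ h
    exact Finset.image_injective hinj h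
  · intro B hB
    simp only [Finset.mem_filter, Finset.mem_powerset] at hB
    obtain ⟨A, -, rfl⟩ := Finset.subset_image_iff.1 hB.1
    exact ⟨A, by simpa using hB.2, rfl⟩
  · intro A hA
    simp only [Finset.mem_filter, Finset.mem_univ, true_and] at hA
    rw [Finset.card_image_of_injective _ hinj, Finset.coe_image, diam_image_stdAddChar hA]

lemma sum_nonempty_neg_one_pow :
    ∑ A ∈ (Finset.univ : Finset (Finset (ZMod n))) with A.Nonempty,
      (-1 : ℝ) ^ (A.card - 1) = 1 := by
  have h := Finset.sum_powerset_neg_one_pow_card_of_nonempty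
    (Finset.univ_nonempty (α := ZMod n))
  rw [Finset.powerset_univ, ← Finset.sum_filter_add_sum_filter_not _ Finset.Nonempty] at h
  have h1 : (Finset.univ : Finset (Finset (ZMod n))).filter (fun A => ¬ A.Nonempty) = {∅} := by
    ext A
    simp
  rw [h1, Finset.sum_singleton, Finset.card_empty, pow_zero] at h
  have h2 : (∑ A ∈ (Finset.univ : Finset (Finset (ZMod n))) with A.Nonempty,
      (-1 : ℝ) ^ A.card) = -1 := by
    have := congrArg (Int.cast : ℤ → ℝ) (eq_neg_of_add_eq_zero_left h)
    push_cast at this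
    exact this
  rw [← neg_neg (1 : ℝ), ← neg_eq_iff_eq_neg, neg_neg, ← Finset.sum_neg_distrib]
  refine Eq.trans (Finset.sum_congr rfl fun A hA => ?_) h2
  obtain ⟨j, hj⟩ := Nat.exists_eq_succ_of_ne_zero
    (Finset.card_pos.2 (Finset.mem_filter.1 hA).2).ne'
  simp [hj, pow_succ]

end Chord

lemma eq_add_sum_range_ite (F : ℕ → ℝ) {D N : ℕ} (h : D ≤ N) :
    F D = F N + ∑ k ∈ Finset.range N, if D ≤ k then F k - F (k + 1) else 0 := by
  induction N, h using Nat.le_induction with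
  | base =>
    rw [Finset.sum_eq_zero, add_zero]
    intro k hk
    rw [if_neg (by simpa using hk)]
  | succ N hN ih =>
    rw [Finset.sum_range_succ, if_pos hN]
    linarith

lemma ripsMag_euclCycle_eq_sum_range [NeZero n] (t : ℝ) :
    ripsMag (euclCycle n) t = Real.exp (-(chord n (n / 2)) * t) +
      ∑ k ∈ Finset.range (n / 2), (if (n - 2 * k) ∣ k then ((n - 2 * k : ℕ) : ℝ) else 0) *
        (Real.exp (-(chord n k) * t) - Real.exp (-(chord n (k + 1)) * t)) := by
  classical
  have h : ∀ A : Finset (ZMod n), (-1 : ℝ) ^ (A.card - 1) *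
      Real.exp (-(chord n (cyclicDiam A)) * t) =
      (-1 : ℝ) ^ (A.card - 1) * Real.exp (-(chord n (n / 2)) * t) +
      ∑ k ∈ Finset.range (n / 2), if IsCyclicClique k A then (-1 : ℝ) ^ (A.card - 1) *
        (Real.exp (-(chord n k) * t) - Real.exp (-(chord n (k + 1)) * t)) else 0 := by
    intro A
    rw [eq_add_sum_range_ite (fun k => Real.exp (-(chord n k) * t))
      (cyclicDiam_le_half (A := A)), mul_add, Finset.mul_sum]
    simp only [cyclicDiam_le_iff, mul_ite, mul_zero]
  rw [ripsMag_euclCycle_eq_sum]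
  simp only [h]
  rw [Finset.sum_add_distrib, ← Finset.sum_mul, sum_nonempty_neg_one_pow, one_mul,
    Finset.sum_comm]
  congr 1
  refine Finset.sum_congr rfl fun k hk => ?_
  rw [Finset.mem_range] at hk
  rw [← sum_cyclicClique (show 2 * k < n by omega), Finset.sum_mul, ← Finset.sum_filter,
    Finset.filter_filter]

end CyclicClique

open CyclicClique in
/-- for `n ≥ 1` and `t > 0`,
`|tC_n^eucl|_Rips = Σ_{odd r ∣ n, r ≠ n} (n/r)(e^{−δ_r t} − e^{−δ_{r,n} t}) + e^{−δ_n t}`. -/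
theorem ripsMag_euclCycle (n : ℕ) (hn : 1 ≤ n) (t : ℝ) (ht : 0 < t) :
    ripsMag (euclCycle n) t =
      (∑ r ∈ n.divisors.filter (fun r => Odd r ∧ r ≠ n),
        ((n / r : ℕ) : ℝ) * (Real.exp (-(deltaE r) * t) - Real.exp (-(deltaE2 r n) * t)))
      + Real.exp (-(deltaE n) * t) := by
  have : NeZero n := ⟨by omega⟩
  have hn0 : (n : ℝ) ≠ 0 := by exact_mod_cast NeZero.ne n
  rw [ripsMag_euclCycle_eq_sum_range, add_comm]
  congr 1
  simp only [ite_mul, zero_mul]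
  rw [← Finset.sum_filter]
  symm
  have hr : ∀ r ∈ n.divisors.filter (fun r => Odd r ∧ r ≠ n),
      ∃ l m, r = 2 * l + 1 ∧ n = (2 * l + 1) * m ∧ 2 ≤ m ∧ n / r = m ∧
        (n - n / r) / 2 = l * m := by
    intro r hr
    simp only [Finset.mem_filter, Nat.mem_divisors] at hr
    obtain ⟨⟨⟨m, hm⟩, -⟩, ⟨l, rfl⟩, hrn⟩ := hr
    have hdiv : n / (2 * l + 1) = m := by
      rw [hm, Nat.mul_div_cancel_left _ (by omega)]
    have hm2 : 2 ≤ m := by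
      by_contra! hlt
      interval_cases m <;> omega
    have hnm : n = 2 * (l * m) + m := by rw [hm]; ring
    exact ⟨l, m, rfl, hm, hm2, hdiv, by omega⟩
  refine Finset.sum_nbij' (fun r => (n - n / r) / 2) (fun k => n / (n - 2 * k)) ?_ ?_ ?_ ?_ ?_
  · intro r h
    obtain ⟨l, m, -, hm, hm2, -, hk⟩ := hr r h
    have hnm : n = 2 * (l * m) + m := by rw [hm]; ring
    have hm' : n - 2 * (l * m) = m := by omega
    simp only [hk, Finset.mem_filter, Finset.mem_range, hm', dvd_mul_left, and_true]
    omega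
  · intro k h
    simp only [Finset.mem_filter, Finset.mem_range] at h
    have hk : 2 * k < n := by omega
    have hdvd := sub_dvd_self hk h.2
    simp only [Finset.mem_filter, Nat.mem_divisors]
    refine ⟨⟨Nat.div_dvd_of_dvd hdvd, by omega⟩, ?_, ?_⟩
    · have := odd_card_residueClass (n := n) (i := 0) hk h.2 (by omega)
      rwa [card_residueClass hdvd (by omega)] at this
    · exact (Nat.div_lt_self (by omega) (by omega)).ne
  · intro r h
    obtain ⟨l, m, hl, hm, hm2, -, hk⟩ := hr r h
    have hnm : n = 2 * (l * m) + m := by rw [hm]; ring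
    have hm' : n - 2 * (l * m) = m := by omega
    simp only [hk, hm']
    rw [hl, hm, Nat.mul_div_cancel _ (by omega)]
  · intro k h
    simp only [Finset.mem_filter, Finset.mem_range] at h
    have hk : 2 * k < n := by omega
    rw [Nat.div_div_self (sub_dvd_self hk h.2) (by omega)]
    omega
  · intro r h
    obtain ⟨l, m, hl, hm, hm2, hdiv, hk⟩ := hr r h
    have hnm : n = 2 * (l * m) + m := by rw [hm]; ring
    have hm' : n - 2 * (l * m) = m := by omega
    have hl2 : (2 * l + 1) / 2 = l := by omega
    have hlm : ((l * m : ℕ) : ℝ) / n = (l : ℝ) / ((2 * l + 1 : ℕ) : ℝ) := by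
      have h1 : ((2 * l + 1 : ℕ) : ℝ) ≠ 0 := by positivity
      rw [div_eq_div_iff hn0 h1, hm]
      push_cast
      ring
    have h1 : deltaE r = chord n (l * m) := by
      rw [deltaE, chord, hl, hl2, mul_div_assoc, mul_div_assoc, hlm]
    have h2 : deltaE2 r n = chord n (l * m + 1) := by
      rw [deltaE2, chord, hl, hl2, mul_div_assoc, Nat.cast_add (l * m) 1, add_div, hlm,
        Nat.cast_one, add_comm]
    rw [hk, hm', hdiv, h1, h2]
end

section
/- Let n ≥ 1 be an integer and t > 0. Then the Rips magnitude function of the geodesic cycle C_n^geo satisfies |tC_n^geo|_Rips = Σ_r (n/r)·(e^{−η_r·t} − e^{−η_{r,n}·t}) + e^{−η_n·t}, where the sum is over all odd divisors r of n with r ≠ n. -/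
open scoped BigOperators Real

open scoped Classical in
/-- The geodesic cycle `C_n^geo`: `n` equally spaced points on the circle
`ℝ/2πℤ` of total arclength `2π`, with the geodesic metric
`d(i,j) = (2π/n)·min(|i−j|, n−|i−j|)`. -/
noncomputable def geoCycle (n : ℕ) : Finset (AddCircle (2 * π : ℝ)) :=
  (Finset.range n).image (fun k => ((2 * π * k / n : ℝ) : AddCircle (2 * π : ℝ)))

/-- `η_m = 2π ⌊m/2⌋ / m`, the diameter of `C_m^geo`. -/
noncomputable def etaG (m : ℕ) : ℝ := 2 * π * ((m / 2 : ℕ) : ℝ) / (m : ℝ)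

/-- `η_{m,n} = 2π (1/n + ⌊m/2⌋/m)`. -/
noncomputable def etaG2 (m n : ℕ) : ℝ :=
  2 * π * (1 / (n : ℝ) + ((m / 2 : ℕ) : ℝ) / (m : ℝ))

/-- The clockwise distance from `x` to `y` on the cycle with vertices `0, …, n - 1`. -/
def cycArc (n x y : ℕ) : ℕ := if x ≤ y then y - x else y + n - x

/-- The combinatorial distance on the cycle with vertices `0, …, n - 1`. -/
def cycDist (n x y : ℕ) : ℕ := min (cycArc n x y) (cycArc n y x)

/-- `A` has diameter at most `k` in the cycle of length `n`. -/
def CycDiamLE (n k : ℕ) (A : Finset ℕ) : Prop := ∀ x ∈ A, ∀ y ∈ A, cycDist n x y ≤ k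

/-- Clockwise rotation by `k`. -/
def cycRot (n k x : ℕ) : ℕ := if x + k < n then x + k else x + k - n

/-- The anticlockwise neighbour. -/
def cycPred (n x : ℕ) : ℕ := if x = 0 then n - 1 else x - 1

/-- The points of `A` which are the last point of `A` in some arc `[x, x + k]` with `x ∈ A`. -/
noncomputable def lastPts (n k : ℕ) (A : Finset ℕ) : Finset ℕ :=
  open Classical in A.filter fun y => ∃ x ∈ A, cycArc n x y ≤ k ∧
    ∀ z ∈ A, cycArc n x z ≤ k → cycArc n x z ≤ cycArc n x y

/-- The last points whose rotation by `k` is not a last point. -/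
noncomputable def pivots (n k : ℕ) (A : Finset ℕ) : Finset ℕ :=
  (lastPts n k A).filter fun p => cycRot n k p ∉ lastPts n k A

theorem mem_lastPts {n k : ℕ} {A : Finset ℕ} {y : ℕ} :
    y ∈ lastPts n k A ↔ y ∈ A ∧ ∃ x ∈ A, cycArc n x y ≤ k ∧
      ∀ z ∈ A, cycArc n x z ≤ k → cycArc n x z ≤ cycArc n x y := by
  classical
  simp only [lastPts, Finset.mem_filter]

theorem pivots_congr {n k : ℕ} {A B : Finset ℕ} (h : lastPts n k A = lastPts n k B) :
    pivots n k A = pivots n k B := by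
  rw [pivots, h, pivots]

theorem lastPts_nonempty {n k : ℕ} {A : Finset ℕ} (hA : A.Nonempty) :
    (lastPts n k A).Nonempty := by
  obtain ⟨x, hx⟩ := hA
  obtain ⟨y, hy, hmax⟩ := Finset.exists_max_image (A.filter fun z => cycArc n x z ≤ k)
    (cycArc n x) ⟨x, Finset.mem_filter.2 ⟨hx, by simp [cycArc]⟩⟩
  rw [Finset.mem_filter] at hy
  exact ⟨y, mem_lastPts.2 ⟨hy.1, x, hx, hy.2, fun z hz hzk =>
    hmax z (Finset.mem_filter.2 ⟨hz, hzk⟩)⟩⟩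

theorem cycRot_mem_lastPts {n k : ℕ} {A : Finset ℕ} (hAn : A ⊆ Finset.range n) (hk : 2 * k + 1 < n)
    {p : ℕ} (hp : p ∈ A) (hr : cycRot n k p ∈ A) : cycRot n k p ∈ lastPts n k A := by
  have hpn := Finset.mem_range.1 (hAn hp)
  have h : cycArc n p (cycRot n k p) = k := by
    unfold cycArc cycRot; split_ifs <;> omega
  exact mem_lastPts.2 ⟨hr, p, hp, h.le, fun z _ hz => hz.trans h.ge⟩

theorem cycRot_notMem_of_mem_pivots {n k : ℕ} {A : Finset ℕ} (hAn : A ⊆ Finset.range n)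
    (hk : 2 * k + 1 < n) {p : ℕ} (hp : p ∈ pivots n k A) : p ∈ A ∧ cycRot n k p ∉ A := by
  rw [pivots, Finset.mem_filter] at hp
  have hpA := (mem_lastPts.1 hp.1).1
  exact ⟨hpA, fun h => hp.2 (cycRot_mem_lastPts hAn hk hpA h)⟩

theorem CycDiamLE.insert_cycPred {n k : ℕ} {A : Finset ℕ} (hAn : A ⊆ Finset.range n)
    (hk : 2 * k + 1 < n) (hA : CycDiamLE n k A) {p : ℕ} (hp : p ∈ A) (hr : cycRot n k p ∉ A) :
    CycDiamLE n k (insert (cycPred n p) A) := by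
  have hpn := Finset.mem_range.1 (hAn hp)
  have key : ∀ x ∈ A, cycDist n x (cycPred n p) ≤ k ∧ cycDist n (cycPred n p) x ≤ k := by
    intro x hx
    have hxn := Finset.mem_range.1 (hAn hx)
    have h1 := hA x hx p hp
    have h2 : x ≠ cycRot n k p := fun h => hr (h ▸ hx)
    have h3 : p ≠ cycRot n k p := fun h => hr (h ▸ hp)
    unfold cycDist cycArc at *
    unfold cycRot at h2 h3
    unfold cycPred
    constructor <;> grind
  intro x hx y hy
  rcases Finset.mem_insert.1 hx with rfl | hx <;> rcases Finset.mem_insert.1 hy with rfl | hy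
  · simp [cycDist, cycArc]
  · exact (key y hy).2
  · exact (key x hx).1
  · exact hA x hx y hy

theorem lastPts_insert_cycPred {n k : ℕ} {A : Finset ℕ} (hAn : A ⊆ Finset.range n)
    (hk : 2 * k + 1 < n) (hA : CycDiamLE n k A) {p : ℕ} (hp : p ∈ A) (hr : cycRot n k p ∉ A)
    (hb : cycPred n p ∉ A) :
    lastPts n k (insert (cycPred n p) A) = lastPts n k A := by
  have hpn := Finset.mem_range.1 (hAn hp)
  have hk0 : 0 < k := by
    rcases Nat.eq_zero_or_pos k with rfl | h
    · exact absurd hp (by simpa [cycRot, hpn] using hr)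
    · exact h
  have toPred : ∀ x ∈ A, cycArc n x (cycPred n p) ≤ k →
      cycArc n x p = cycArc n x (cycPred n p) + 1 ∧ cycArc n x p ≤ k := by
    intro x hx h
    have hxn := Finset.mem_range.1 (hAn hx)
    have h1 := hA x hx p hp
    unfold cycDist cycArc at *
    unfold cycPred at *
    constructor <;> grind
  have fromPred : ∀ x ∈ A, cycArc n (cycPred n p) x = cycArc n p x + 1 := by
    intro x hx
    have hxn := Finset.mem_range.1 (hAn hx)
    have h2 : x ≠ cycPred n p := fun h => hb (h ▸ hx)
    unfold cycArc cycPred at *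
    grind
  have hne : ∀ x ∈ A, cycArc n p x ≠ k := by
    intro x hx h
    have hxn := Finset.mem_range.1 (hAn hx)
    have h2 : x ≠ cycRot n k p := fun h => hr (h ▸ hx)
    unfold cycArc cycRot at *
    grind
  ext y
  rw [mem_lastPts, mem_lastPts]
  constructor
  · rintro ⟨hy, x, hx, hxy, hmax⟩
    rcases Finset.mem_insert.1 hx with rfl | hxA
    · rcases Finset.mem_insert.1 hy with rfl | hyA
      · have h1 := hmax p (Finset.mem_insert_of_mem hp)
        rw [fromPred p hp] at h1
        simp only [cycArc, le_refl, if_true, Nat.sub_self] at h1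
        omega
      · refine ⟨hyA, p, hp, ?_, fun z hz hzk => ?_⟩
        · have := fromPred y hyA; omega
        · have h1 := hmax z (Finset.mem_insert_of_mem hz)
          rw [fromPred z hz, fromPred y hyA] at h1
          have := hne z hz
          omega
    · rcases Finset.mem_insert.1 hy with rfl | hyA
      · have h1 := toPred x hxA hxy
        have h2 := hmax p (Finset.mem_insert_of_mem hp) h1.2
        omega
      · exact ⟨hyA, x, hxA, hxy, fun z hz => hmax z (Finset.mem_insert_of_mem hz)⟩
  · rintro ⟨hy, x, hx, hxy, hmax⟩
    refine ⟨Finset.mem_insert_of_mem hy, x, Finset.mem_insert_of_mem hx, hxy, fun z hz hzk => ?_⟩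
    rcases Finset.mem_insert.1 hz with rfl | hzA
    · have h1 := toPred x hx hzk
      have h2 := hmax p hp h1.2
      omega
    · exact hmax z hzA hzk

/-- Insert `b` into `A` if it is missing, delete it if it is present. -/
def toggle (b : ℕ) (A : Finset ℕ) : Finset ℕ := if b ∈ A then A.erase b else insert b A

theorem toggle_toggle (b : ℕ) (A : Finset ℕ) : toggle b (toggle b A) = A := by
  by_cases h : b ∈ A <;> simp [toggle, h]

theorem toggle_ne (b : ℕ) (A : Finset ℕ) : toggle b A ≠ A := by
  by_cases h : b ∈ A <;> simp [toggle, h]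

theorem neg_one_pow_toggle (b : ℕ) {A : Finset ℕ} (hA : A.Nonempty) (hB : (toggle b A).Nonempty) :
    (-1 : ℝ) ^ (A.card - 1) + (-1 : ℝ) ^ ((toggle b A).card - 1) = 0 := by
  have h1 := hA.card_pos
  have h2 := hB.card_pos
  by_cases h : b ∈ A
  · simp only [toggle, h, if_true, Finset.card_erase_of_mem] at h2 ⊢
    obtain ⟨c, hc⟩ : ∃ c, A.card = c + 2 := ⟨A.card - 2, by omega⟩
    simp [hc, pow_succ]
  · simp only [toggle, h, if_false, Finset.card_insert_of_notMem, not_false_eq_true] at h2 ⊢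
    obtain ⟨c, hc⟩ : ∃ c, A.card = c + 1 := ⟨A.card - 1, by omega⟩
    simp [hc, pow_succ]

theorem toggle_cycPred {n k : ℕ} {A : Finset ℕ} (hAn : A ⊆ Finset.range n)
    (hk : 2 * k + 1 < n) (hA : CycDiamLE n k A) {p : ℕ} (hp : p ∈ A) (hr : cycRot n k p ∉ A) :
    toggle (cycPred n p) A ⊆ Finset.range n ∧ p ∈ toggle (cycPred n p) A ∧
      CycDiamLE n k (toggle (cycPred n p) A) ∧
      lastPts n k (toggle (cycPred n p) A) = lastPts n k A := by
  have hpn := Finset.mem_range.1 (hAn hp)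
  have hpred : cycPred n p < n := by unfold cycPred; split_ifs <;> omega
  have hne : p ≠ cycPred n p := by unfold cycPred; split_ifs <;> omega
  by_cases hb : cycPred n p ∈ A
  · simp only [toggle, hb, if_true]
    have hpe : p ∈ A.erase (cycPred n p) := Finset.mem_erase.2 ⟨hne, hp⟩
    have hsub := Finset.erase_subset (cycPred n p) A
    have hcl : CycDiamLE n k (A.erase (cycPred n p)) :=
      fun x hx y hy => hA x (hsub hx) y (hsub hy)
    refine ⟨hsub.trans hAn, hpe, hcl, ?_⟩
    have := lastPts_insert_cycPred (hsub.trans hAn) hk hcl hpe (fun h => hr (hsub h))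
      (Finset.notMem_erase _ _)
    rw [← this, Finset.insert_erase hb]
  · simp only [toggle, hb, if_false]
    exact ⟨Finset.insert_subset (Finset.mem_range.2 hpred) hAn, Finset.mem_insert_of_mem hp,
      hA.insert_cycPred hAn hk hp hr, lastPts_insert_cycPred hAn hk hA hp hr hb⟩

/-- The nonempty sets of vertices of diameter at most `k`. -/
noncomputable def cycCliques (n k : ℕ) : Finset (Finset ℕ) :=
  open Classical in (Finset.range n).powerset.filter fun A => A.Nonempty ∧ CycDiamLE n k A

theorem mem_cycCliques {n k : ℕ} {A : Finset ℕ} :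
    A ∈ cycCliques n k ↔ A ⊆ Finset.range n ∧ A.Nonempty ∧ CycDiamLE n k A := by
  classical
  simp [cycCliques]

theorem sum_cycCliques_pivots_nonempty {n k : ℕ} (hk : 2 * k + 1 < n) :
    ∑ A ∈ (cycCliques n k).filter (fun A => (pivots n k A).Nonempty),
      (-1 : ℝ) ^ (A.card - 1) = 0 := by
  have main : ∀ A (hA : A ∈ (cycCliques n k).filter (fun A => (pivots n k A).Nonempty)),
      toggle (cycPred n ((pivots n k A).min' (Finset.mem_filter.1 hA).2)) A ∈ cycCliques n k ∧
      pivots n k (toggle (cycPred n ((pivots n k A).min' (Finset.mem_filter.1 hA).2)) A)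
        = pivots n k A := by
    intro A hA
    obtain ⟨hA1, hA2⟩ := Finset.mem_filter.1 hA
    obtain ⟨hAn, -, hcl⟩ := mem_cycCliques.1 hA1
    have hp := cycRot_notMem_of_mem_pivots hAn hk (Finset.min'_mem _ hA2)
    obtain ⟨h1, h2, h3, h4⟩ := toggle_cycPred hAn hk hcl hp.1 hp.2
    exact ⟨mem_cycCliques.2 ⟨h1, ⟨_, h2⟩, h3⟩, pivots_congr h4⟩
  refine Finset.sum_involution
    (fun A hA => toggle (cycPred n ((pivots n k A).min' (Finset.mem_filter.1 hA).2)) A) ?_ ?_ ?_ ?_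
  · intro A hA
    exact neg_one_pow_toggle _ (mem_cycCliques.1 (Finset.mem_filter.1 hA).1).2.1
      (mem_cycCliques.1 (main A hA).1).2.1
  · intro A hA _
    exact toggle_ne _ _
  · intro A hA
    exact Finset.mem_filter.2 ⟨(main A hA).1, by rw [(main A hA).2]; exact (Finset.mem_filter.1 hA).2⟩
  · intro A hA
    simp only [(main A hA).2, toggle_toggle]

/-- The arithmetic progression of length `r` with step `d` starting at `i`. -/
def cycCoset (d r i : ℕ) : Finset ℕ := (Finset.range r).image fun j => d * j + i

theorem mem_cycCoset {d r i x : ℕ} : x ∈ cycCoset d r i ↔ ∃ j < r, d * j + i = x := by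
  simp [cycCoset]

theorem mem_cycCoset_of_mod {d r i x : ℕ} (hx : x < d * r) (h : x % d = i) :
    x ∈ cycCoset d r i :=
  mem_cycCoset.2 ⟨x / d, Nat.div_lt_of_lt_mul hx, h ▸ Nat.div_add_mod x d⟩

theorem card_cycCoset {d r i : ℕ} (hd : 0 < d) : (cycCoset d r i).card = r := by
  rw [cycCoset, Finset.card_image_of_injective, Finset.card_range]
  intro a b h
  exact Nat.eq_of_mul_eq_mul_left hd (Nat.add_right_cancel h)

theorem mod_of_mem_cycCoset {d r i x : ℕ} (hi : i < d) (hx : x ∈ cycCoset d r i) : x % d = i := by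
  obtain ⟨j, -, rfl⟩ := mem_cycCoset.1 hx
  rw [Nat.mul_add_mod, Nat.mod_eq_of_lt hi]

theorem cycCoset_mem_cycCliques {d m i : ℕ} (hi : i < d) :
    cycCoset d (2 * m + 1) i ∈ cycCliques (d * (2 * m + 1)) (d * m) := by
  have hlt : ∀ j < 2 * m + 1, d * j + i < d * (2 * m + 1) := fun j hj => by nlinarith
  refine mem_cycCliques.2 ⟨fun x hx => ?_, ⟨i, mem_cycCoset.2 ⟨0, by omega, by simp⟩⟩, ?_⟩
  · obtain ⟨j, hj, rfl⟩ := mem_cycCoset.1 hx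
    exact Finset.mem_range.2 (hlt j hj)
  · have key : ∀ a c, a + c < 2 * m + 1 →
        cycDist (d * (2 * m + 1)) (d * a + i) (d * (a + c) + i) ≤ d * m := by
      intro a c h
      have e1 : cycArc (d * (2 * m + 1)) (d * a + i) (d * (a + c) + i) = d * c := by
        have : d * (a + c) = d * a + d * c := by ring
        unfold cycArc; split_ifs <;> omega
      have e2 : cycArc (d * (2 * m + 1)) (d * (a + c) + i) (d * a + i) ≤
          d * (2 * m + 1) - d * c := by
        have h1 : d * (a + c) = d * a + d * c := by ring
        have h2 := Nat.mul_le_mul_left d h.le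
        unfold cycArc; split_ifs <;> omega
      rcases le_or_gt c m with hc | hc
      · exact (min_le_left _ _).trans (e1.le.trans (Nat.mul_le_mul_left d hc))
      · refine (min_le_right _ _).trans (e2.trans ?_)
        rw [← Nat.mul_sub]
        exact Nat.mul_le_mul_left d (by omega)
    intro x hx y hy
    obtain ⟨a, ha, rfl⟩ := mem_cycCoset.1 hx
    obtain ⟨b, hb, rfl⟩ := mem_cycCoset.1 hy
    rcases le_total a b with h | h <;> obtain ⟨c, rfl⟩ := Nat.exists_eq_add_of_le h
    · exact key a c hb
    · rw [cycDist, min_comm]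
      exact key b c ha

theorem pivots_cycCoset {d m i : ℕ} (hi : i < d)
    (hk : 2 * (d * m) + 1 < d * (2 * m + 1)) :
    ¬ (pivots (d * (2 * m + 1)) (d * m) (cycCoset d (2 * m + 1) i)).Nonempty := by
  rintro ⟨p, hp⟩
  obtain ⟨h1, h2⟩ :=
    cycRot_notMem_of_mem_pivots (mem_cycCliques.1 (cycCoset_mem_cycCliques hi)).1 hk hp
  obtain ⟨j, hj, rfl⟩ := mem_cycCoset.1 h1
  refine h2 (mem_cycCoset.2 ?_)
  have e : d * (j + m) = d * j + d * m := by ring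
  unfold cycRot
  split_ifs with h
  · exact ⟨j + m, by by_contra hc; nlinarith, by omega⟩
  · have hjm : 2 * m + 1 ≤ j + m := by by_contra hc; nlinarith
    obtain ⟨c, hc⟩ := Nat.exists_eq_add_of_le hjm
    have e2 : d * (2 * m + 1 + c) = d * (2 * m + 1) + d * c := by ring
    rw [hc] at e
    exact ⟨c, by omega, by omega⟩

theorem mem_of_mod_gcd_eq {n k : ℕ} {S : Finset ℕ} (hSn : S ⊆ Finset.range n) (hk : k < n)
    (hS : ∀ s ∈ S, cycRot n k s ∈ S) {s y : ℕ} (hs : s ∈ S) (hy : y < n)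
    (h : y % Nat.gcd k n = s % Nat.gcd k n) : y ∈ S := by
  have step : ∀ s ∈ S, (s + k) % n ∈ S := by
    intro s hs
    have hsn := Finset.mem_range.1 (hSn hs)
    have := hS s hs
    rw [cycRot] at this
    split_ifs at this with h1
    · rwa [Nat.mod_eq_of_lt h1]
    · rwa [Nat.mod_eq_sub_mod (by omega), Nat.mod_eq_of_lt (by omega)]
  have steps : ∀ j, ∀ s ∈ S, (s + k * j) % n ∈ S := by
    intro j s hs
    induction j with
    | zero => rwa [mul_zero, add_zero, Nat.mod_eq_of_lt (Finset.mem_range.1 (hSn hs))]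
    | succ j ih =>
      have := step _ ih
      rwa [Nat.mod_add_mod, add_assoc, ← Nat.mul_succ] at this
  obtain ⟨j, hj⟩ : ∃ j, k * j ≡ Nat.gcd k n [MOD n] := by
    rcases (Nat.gcd_le_right k (by omega : 0 < n)).lt_or_eq with h1 | h1
    · obtain ⟨j, -, hj⟩ := Nat.exists_mul_mod_eq_gcd h1
      exact ⟨j, by rw [Nat.ModEq, hj, Nat.mod_eq_of_lt h1]⟩
    · exact ⟨0, by rw [h1]; simp [Nat.ModEq]⟩
  have hsn := Finset.mem_range.1 (hSn hs)
  obtain ⟨c, hc⟩ : Nat.gcd k n ∣ y + n - s := by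
    refine (Nat.modEq_iff_dvd' (by omega)).1 ?_
    rw [Nat.ModEq, ← h]
    obtain ⟨r, hr⟩ := Nat.gcd_dvd_right k n
    rw [show y + n = y + Nat.gcd k n * r from congrArg _ hr, Nat.add_mul_mod_self_left]
  have := steps (j * c) s hs
  have e : s + k * (j * c) ≡ y [MOD n] := by
    calc s + k * (j * c) = s + k * j * c := by ring
      _ ≡ s + Nat.gcd k n * c [MOD n] := (hj.mul_right c).add_left s
      _ = y + n := by omega
      _ ≡ y [MOD n] := by simp [Nat.ModEq]
  rwa [e, Nat.mod_eq_of_lt hy] at this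

theorem eq_cycCoset_of_pivots_empty {n k : ℕ} (hk : 2 * k + 1 < n) {A : Finset ℕ}
    (hA : A ∈ cycCliques n k) (hpiv : ¬ (pivots n k A).Nonempty) :
    ∃ d m i, i < d ∧ n = d * (2 * m + 1) ∧ k = d * m ∧ A = cycCoset d (2 * m + 1) i := by
  obtain ⟨hAn, hne, hcl⟩ := mem_cycCliques.1 hA
  obtain ⟨s, hs⟩ := lastPts_nonempty (n := n) (k := k) hne
  have hSA : lastPts n k A ⊆ A := fun x hx => (mem_lastPts.1 hx).1
  have hrot : ∀ s ∈ lastPts n k A, cycRot n k s ∈ lastPts n k A := by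
    intro s hs
    by_contra h
    exact hpiv ⟨s, Finset.mem_filter.2 ⟨hs, h⟩⟩
  have hmem : ∀ y < n, y % Nat.gcd k n = s % Nat.gcd k n → y ∈ A := fun y hy h =>
    hSA (mem_of_mod_gcd_eq (hSA.trans hAn) (by omega) hrot hs hy h)
  obtain ⟨r, hr⟩ := Nat.gcd_dvd_right k n
  obtain ⟨c, hc⟩ := Nat.gcd_dvd_left k n
  have hd : 0 < Nat.gcd k n := Nat.gcd_pos_of_pos_right k (by omega)
  set d := Nat.gcd k n with hdd
  clear_value d
  have hi : s % d < d := Nat.mod_lt _ hd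
  set i := s % d
  clear_value i
  have himod : i % d = i := Nat.mod_eq_of_lt hi
  have hr0 : 0 < r := by
    rcases Nat.eq_zero_or_pos r with rfl | h
    · omega
    · exact h
  have hdr : d ≤ d * r := Nat.le_mul_of_pos_right d hr0
  have hiA : i ∈ A := hmem i (by omega) himod
  have hdist : ∀ m, m < r → min (d * m) (n - d * m) ≤ k := by
    intro m hm
    have h1 : d * m + d ≤ d * r := by nlinarith
    have h2 : d * m + i ∈ A := hmem _ (by omega) (by rw [Nat.mul_add_mod, himod])
    have h3 := hcl i hiA _ h2
    unfold cycDist cycArc at h3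
    grind
  obtain ⟨m, rfl⟩ : ∃ m, r = 2 * m + 1 := by
    rcases Nat.even_or_odd' r with ⟨m, h | h⟩
    · have h1 := hdist m (by omega)
      have h2 : d * r = 2 * (d * m) := by rw [h]; ring
      omega
    · exact ⟨m, h⟩
  have e1 : d * (2 * m + 1) = 2 * (d * m) + d := by ring
  have hcm : c = m := by
    have h1 := hdist m (by omega)
    have h2 : d * m ≤ d * c := by omega
    have h3 := Nat.le_of_mul_le_mul_left h2 hd
    have h4 : ¬ m + 1 ≤ c := fun h => by nlinarith
    omega
  subst hcm
  refine ⟨d, c, i, hi, hr, hc, ?_⟩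
  ext x
  constructor
  · intro hx
    have hxn := Finset.mem_range.1 (hAn hx)
    refine mem_cycCoset_of_mod (hr ▸ hxn) ?_
    by_contra hxi
    have hxd := Nat.mod_lt x hd
    obtain ⟨e, he0, hed, q, hq⟩ : ∃ e, 0 < e ∧ e < d ∧ (d : ℤ) ∣ (x : ℤ) - e - i := by
      have h0 : (x : ℤ) = d * (x / d : ℕ) + (x % d : ℕ) := by
        exact_mod_cast (Nat.div_add_mod x d).symm
      rcases lt_or_gt_of_ne hxi with h | h
      · refine ⟨x % d + d - i, by omega, by omega, (x / d : ℕ) - 1, ?_⟩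
        rw [Nat.cast_sub (by omega), mul_sub]
        push_cast at h0 ⊢
        linarith
      · refine ⟨x % d - i, by omega, by omega, (x / d : ℕ), ?_⟩
        rw [Nat.cast_sub (by omega)]
        push_cast at h0 ⊢
        linarith
    have hz : ∃ z < n, (z + e + k = x ∨ z + e + k = x + n) := by
      rcases le_or_gt (e + k) x with h | h
      · exact ⟨x - e - k, by omega, Or.inl (by omega)⟩
      · exact ⟨x + n - e - k, by omega, Or.inr (by omega)⟩
    obtain ⟨z, hzn, hz⟩ := hz
    have hzA : z ∈ A := by
      refine hmem z hzn ?_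
      have hdvd : (d : ℤ) ∣ (z : ℤ) - i := by
        rcases hz with h | h
        · refine ⟨q - c, ?_⟩
          have : (z : ℤ) + e + d * c = x := by exact_mod_cast hc ▸ h
          rw [mul_sub]; linarith
        · refine ⟨q - c + (2 * c + 1), ?_⟩
          have : (z : ℤ) + e + k = x + n := by exact_mod_cast h
          rw [hr, hc] at this
          push_cast at this
          rw [mul_add, mul_sub]; linarith
      rw [← himod]
      exact ((Nat.modEq_iff_dvd).2 hdvd).symm
    have h3 := hcl z hzA x hx
    unfold cycDist cycArc at h3
    grind
  · intro hx
    refine hmem x ?_ (mod_of_mem_cycCoset hi hx)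
    obtain ⟨j, hj, rfl⟩ := mem_cycCoset.1 hx
    have : d * j + d ≤ d * (2 * c + 1) := by nlinarith
    omega

theorem sum_cycCliques_eq_sum_fixed {n k : ℕ} (hk : 2 * k + 1 < n) :
    ∑ A ∈ cycCliques n k, (-1 : ℝ) ^ (A.card - 1) =
      ∑ A ∈ (cycCliques n k).filter (fun A => ¬ (pivots n k A).Nonempty),
        (-1 : ℝ) ^ (A.card - 1) := by
  rw [← Finset.sum_filter_add_sum_filter_not (cycCliques n k)
    (fun A => (pivots n k A).Nonempty), sum_cycCliques_pivots_nonempty hk, zero_add]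

theorem gcd_mul_two_mul_add_one (d m : ℕ) : Nat.gcd (d * m) (d * (2 * m + 1)) = d := by
  rw [Nat.gcd_mul_left, mul_comm 2 m]
  simp

theorem sum_cycCliques_eq_zero {n k : ℕ} (hk : 2 * k + 1 < n)
    (h : ∀ d m, n = d * (2 * m + 1) → k ≠ d * m) :
    ∑ A ∈ cycCliques n k, (-1 : ℝ) ^ (A.card - 1) = 0 := by
  rw [sum_cycCliques_eq_sum_fixed hk, Finset.filter_false_of_mem, Finset.sum_empty]
  intro A hA hp
  obtain ⟨d, m, i, -, h1, h2, -⟩ := eq_cycCoset_of_pivots_empty hk hA hp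
  exact h d m h1 h2

theorem sum_cycCliques_eq {d m : ℕ} (hk : 2 * (d * m) + 1 < d * (2 * m + 1)) :
    ∑ A ∈ cycCliques (d * (2 * m + 1)) (d * m), (-1 : ℝ) ^ (A.card - 1) = d := by
  have hd : 0 < d := by
    rcases Nat.eq_zero_or_pos d with rfl | h
    · simp at hk
    · exact h
  have himage : (cycCliques (d * (2 * m + 1)) (d * m)).filter
      (fun A => ¬ (pivots (d * (2 * m + 1)) (d * m) A).Nonempty) =
      (Finset.range d).image (cycCoset d (2 * m + 1)) := by
    ext A
    simp only [Finset.mem_filter, Finset.mem_image, Finset.mem_range]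
    constructor
    · rintro ⟨hA, hp⟩
      obtain ⟨d', m', i, hi, h1, h2, rfl⟩ := eq_cycCoset_of_pivots_empty hk hA hp
      have hdd : d = d' := by
        rw [← gcd_mul_two_mul_add_one d m, h1, h2, gcd_mul_two_mul_add_one]
      subst hdd
      have hmm := Nat.eq_of_mul_eq_mul_left hd h2
      subst hmm
      exact ⟨i, hi, rfl⟩
    · rintro ⟨i, hi, rfl⟩
      exact ⟨cycCoset_mem_cycCliques hi, pivots_cycCoset hi hk⟩
  rw [sum_cycCliques_eq_sum_fixed hk, himage, Finset.sum_image]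
  · simp [card_cycCoset hd]
  · intro a ha b hb hab
    have ha' : a < d := by simpa using ha
    have hb' : b < d := by simpa using hb
    have : a ∈ cycCoset d (2 * m + 1) b := hab ▸ mem_cycCoset.2 ⟨0, by omega, by simp⟩
    rw [← mod_of_mem_cycCoset hb' this, Nat.mod_eq_of_lt ha']

/-- The diameter of a set of vertices of the cycle of length `n`. -/
def cycDiam (n : ℕ) (A : Finset ℕ) : ℕ := (A ×ˢ A).sup fun p => cycDist n p.1 p.2

theorem cycDiam_le_iff {n k : ℕ} {A : Finset ℕ} : cycDiam n A ≤ k ↔ CycDiamLE n k A := by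
  simp only [cycDiam, Finset.sup_le_iff, Finset.mem_product, Prod.forall, CycDiamLE]
  exact ⟨fun h x hx y hy => h x y ⟨hx, hy⟩, fun h x y hxy => h x hxy.1 y hxy.2⟩

theorem cycDiam_le_half {n : ℕ} {A : Finset ℕ} (hA : A ⊆ Finset.range n) :
    cycDiam n A ≤ n / 2 := by
  refine cycDiam_le_iff.2 fun x hx y hy => ?_
  have hxn := Finset.mem_range.1 (hA hx)
  have hyn := Finset.mem_range.1 (hA hy)
  unfold cycDist cycArc
  grind

theorem pow_eq_add_sum_ite (q : ℝ) {a M : ℕ} (h : a ≤ M) :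
    q ^ a = q ^ M + ∑ k ∈ Finset.range M, if a ≤ k then q ^ k - q ^ (k + 1) else 0 := by
  induction M, h using Nat.le_induction with
  | base =>
    rw [Finset.sum_eq_zero, add_zero]
    intro k hk
    rw [if_neg (by simpa using hk)]
  | succ M hM ih =>
    rw [Finset.sum_range_succ, if_pos hM]
    linarith

theorem sum_nonempty_neg_one_pow {n : ℕ} (hn : 1 ≤ n) :
    ∑ A ∈ (Finset.range n).powerset.filter (fun A => A.Nonempty), (-1 : ℝ) ^ (A.card - 1) = 1 := by
  have h := Finset.sum_powerset_neg_one_pow_card_of_nonempty (x := Finset.range n)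
    (Finset.nonempty_range_iff.2 (by omega))
  have h' : ∑ A ∈ (Finset.range n).powerset, (-1 : ℝ) ^ A.card = 0 := by exact_mod_cast h
  rw [← Finset.sum_filter_add_sum_filter_not _ (fun A : Finset ℕ => A.Nonempty)] at h'
  have e : (Finset.range n).powerset.filter (fun A => ¬ A.Nonempty) = {∅} := by
    ext A
    simp only [Finset.mem_filter, Finset.mem_powerset, Finset.not_nonempty_iff_eq_empty,
      Finset.mem_singleton]
    exact ⟨fun h => h.2, fun h => ⟨h ▸ Finset.empty_subset _, h⟩⟩
  have e2 : ∑ A ∈ (Finset.range n).powerset.filter (fun A => A.Nonempty), (-1 : ℝ) ^ A.card =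
      -∑ A ∈ (Finset.range n).powerset.filter (fun A => A.Nonempty), (-1 : ℝ) ^ (A.card - 1) := by
    rw [← Finset.sum_neg_distrib]
    refine Finset.sum_congr rfl fun A hA => ?_
    obtain ⟨c, hc⟩ := Nat.exists_eq_add_of_le (Finset.mem_filter.1 hA).2.card_pos
    rw [hc, Nat.add_sub_cancel_left, pow_add]
    simp
  rw [e, e2] at h'
  simp at h'
  linarith

theorem sum_pow_cycDiam_eq_euler {n : ℕ} (hn : 1 ≤ n) (q : ℝ) :
    ∑ A ∈ (Finset.range n).powerset.filter (fun A => A.Nonempty),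
      (-1 : ℝ) ^ (A.card - 1) * q ^ cycDiam n A =
    ∑ k ∈ Finset.range (n / 2), (∑ A ∈ cycCliques n k, (-1 : ℝ) ^ (A.card - 1)) *
      (q ^ k - q ^ (k + 1)) + q ^ (n / 2) := by
  have h1 : ∀ k, cycCliques n k = ((Finset.range n).powerset.filter (fun A => A.Nonempty)).filter
      (fun A => cycDiam n A ≤ k) := by
    intro k
    ext A
    simp only [mem_cycCliques, Finset.mem_filter, Finset.mem_powerset, cycDiam_le_iff, and_assoc]
  calc _ = ∑ A ∈ (Finset.range n).powerset.filter (fun A => A.Nonempty),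
        ((-1 : ℝ) ^ (A.card - 1) * q ^ (n / 2) + ∑ k ∈ Finset.range (n / 2),
          if cycDiam n A ≤ k then (-1 : ℝ) ^ (A.card - 1) * (q ^ k - q ^ (k + 1)) else 0) := by
        refine Finset.sum_congr rfl fun A hA => ?_
        have hA' := Finset.mem_powerset.1 (Finset.mem_filter.1 hA).1
        rw [pow_eq_add_sum_ite q (cycDiam_le_half hA'), mul_add, Finset.mul_sum]
        simp only [mul_ite, mul_zero]
    _ = _ := by
        rw [Finset.sum_add_distrib, ← Finset.sum_mul, sum_nonempty_neg_one_pow hn, one_mul,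
          Finset.sum_comm, add_comm]
        congr 1
        refine Finset.sum_congr rfl fun k _ => ?_
        rw [h1, ← Finset.sum_filter, Finset.sum_mul]

theorem sum_cycCliques_eq_sum_divisors {n k : ℕ} (hk : k < n / 2) :
    ∑ A ∈ cycCliques n k, (-1 : ℝ) ^ (A.card - 1) =
      ∑ r ∈ n.divisors.filter (fun r => Odd r ∧ r ≠ n),
        if k = n / r * (r / 2) then ((n / r : ℕ) : ℝ) else 0 := by
  have hk' : 2 * k + 1 < n := by omega
  by_cases h : ∃ d m, n = d * (2 * m + 1) ∧ k = d * m
  · obtain ⟨d, m, rfl, rfl⟩ := h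
    have hd : 0 < d := by
      rcases Nat.eq_zero_or_pos d with rfl | h
      · simp at hk'
      · exact h
    have hdiv : d * (2 * m + 1) / (2 * m + 1) = d := Nat.mul_div_cancel _ (by omega)
    have hhalf : ∀ m : ℕ, (2 * m + 1) / 2 = m := fun m => by omega
    rw [sum_cycCliques_eq hk', Finset.sum_eq_single (2 * m + 1)]
    · rw [hdiv, hhalf, if_pos rfl]
    · intro r hr hne
      obtain ⟨hr1, ⟨c, rfl⟩, -⟩ := Finset.mem_filter.1 hr
      obtain ⟨e, he⟩ := Nat.dvd_of_mem_divisors hr1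
      refine if_neg fun h => hne ?_
      rw [he, Nat.mul_div_cancel_left _ (by omega), hhalf] at h
      have hde : d = e := by
        rw [← gcd_mul_two_mul_add_one d m, h, he, mul_comm (2 * c + 1), gcd_mul_two_mul_add_one]
      subst hde
      rw [Nat.eq_of_mul_eq_mul_left hd h]
    · intro hr
      refine absurd (Finset.mem_filter.2 ⟨Nat.mem_divisors.2 ⟨Dvd.intro_left _ rfl, by omega⟩,
        ⟨m, rfl⟩, fun h => ?_⟩) hr
      have hd1 : d = 1 := by
        rwa [← h, Nat.div_self (by omega), eq_comm] at hdiv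
      subst hd1
      omega
  · push Not at h
    rw [sum_cycCliques_eq_zero hk' h, Finset.sum_eq_zero]
    intro r hr
    obtain ⟨hr1, ⟨c, rfl⟩, -⟩ := Finset.mem_filter.1 hr
    refine if_neg fun hkr => h (n / (2 * c + 1)) c
      (Nat.div_mul_cancel (Nat.dvd_of_mem_divisors hr1)).symm ?_
    rw [hkr]
    congr 1
    omega

theorem sum_pow_cycDiam {n : ℕ} (hn : 1 ≤ n) (q : ℝ) :
    ∑ A ∈ (Finset.range n).powerset.filter (fun A => A.Nonempty),
      (-1 : ℝ) ^ (A.card - 1) * q ^ cycDiam n A =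
    ∑ r ∈ n.divisors.filter (fun r => Odd r ∧ r ≠ n),
      ((n / r : ℕ) : ℝ) * (q ^ (n / r * (r / 2)) - q ^ (n / r * (r / 2) + 1)) + q ^ (n / 2) := by
  rw [sum_pow_cycDiam_eq_euler hn]
  congr 1
  calc _ = ∑ k ∈ Finset.range (n / 2), ∑ r ∈ n.divisors.filter (fun r => Odd r ∧ r ≠ n),
        if k = n / r * (r / 2) then
          ((n / r : ℕ) : ℝ) * (q ^ (n / r * (r / 2)) - q ^ (n / r * (r / 2) + 1)) else 0 := by
        refine Finset.sum_congr rfl fun k hk => ?_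
        rw [sum_cycCliques_eq_sum_divisors (Finset.mem_range.1 hk), Finset.sum_mul]
        refine Finset.sum_congr rfl fun r _ => ?_
        split_ifs with h
        · rw [← h]
        · rw [zero_mul]
    _ = _ := by
        rw [Finset.sum_comm]
        refine Finset.sum_congr rfl fun r hr => ?_
        rw [Finset.sum_ite_eq', if_pos]
        obtain ⟨hr1, ⟨c, rfl⟩, hrn⟩ := Finset.mem_filter.1 hr
        obtain ⟨e, he⟩ := Nat.dvd_of_mem_divisors hr1
        have he2 : 2 ≤ e := by
          by_contra h
          have : e = 0 ∨ e = 1 := by omega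
          rcases this with rfl | rfl
          · simp at he; omega
          · exact hrn (by omega)
        rw [he, Nat.mul_div_cancel_left _ (by omega), show (2 * c + 1) / 2 = c by omega,
          Finset.mem_range]
        have e1 : (2 * c + 1) * e = 2 * (e * c) + e := by ring
        omega

/-- The `k`-th vertex of the geodesic cycle of length `n`. -/
noncomputable def geoPoint (n k : ℕ) : AddCircle (2 * π : ℝ) := ((2 * π * k / n : ℝ) : AddCircle _)

theorem dist_geoPoint_of_le {n x y : ℕ} (hx : x ≤ y) (hy : y < n) :
    dist (geoPoint n x) (geoPoint n y) = 2 * π / n * cycDist n x y := by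
  have : Fact ((0 : ℝ) < 2 * π) := ⟨Real.two_pi_pos⟩
  have e : (2 * π * y / n : ℝ) - 2 * π * x / n = ((y - x : ℕ) : ℝ) / n * (2 * π) := by
    rw [Nat.cast_sub hx]; ring
  have e2 : min ((y - x) % n) (n - (y - x) % n) = cycDist n x y := by
    rw [Nat.mod_eq_of_lt (by omega)]
    unfold cycDist cycArc
    grind
  rw [dist_comm, dist_eq_norm, geoPoint, geoPoint, ← AddCircle.coe_sub, e,
    AddCircle.norm_div_natCast, e2]
  ring

theorem dist_geoPoint {n x y : ℕ} (hx : x < n) (hy : y < n) :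
    dist (geoPoint n x) (geoPoint n y) = 2 * π / n * cycDist n x y := by
  rcases le_total x y with h | h
  · exact dist_geoPoint_of_le h hy
  · rw [dist_comm, dist_geoPoint_of_le h hx, cycDist, cycDist, min_comm]

theorem geoPoint_injOn (n : ℕ) : Set.InjOn (geoPoint n) (Finset.range n) := by
  intro x hx y hy h
  have hx' : x < n := by simpa using hx
  have hy' : y < n := by simpa using hy
  have hn : (0 : ℝ) < n := by exact_mod_cast (by omega : 0 < n)
  have h0 := dist_geoPoint hx' hy'
  rw [h, dist_self] at h0
  have h1 : cycDist n x y = 0 := by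
    have hpos : (0 : ℝ) < 2 * π / n := div_pos Real.two_pi_pos hn
    exact_mod_cast (mul_eq_zero.1 h0.symm).resolve_left hpos.ne'
  unfold cycDist cycArc at h1
  grind

theorem diam_image_geoPoint {n : ℕ} {A : Finset ℕ} (hA : A ⊆ Finset.range n) (hne : A.Nonempty) :
    Metric.diam (geoPoint n '' (A : Set ℕ)) = 2 * π / n * cycDiam n A := by
  have hc : (0 : ℝ) ≤ 2 * π / n := div_nonneg Real.two_pi_pos.le (Nat.cast_nonneg n)
  apply le_antisymm
  · refine Metric.diam_le_of_forall_dist_le (mul_nonneg hc (Nat.cast_nonneg _)) ?_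
    rintro _ ⟨x, hx, rfl⟩ _ ⟨y, hy, rfl⟩
    rw [dist_geoPoint (Finset.mem_range.1 (hA hx)) (Finset.mem_range.1 (hA hy))]
    exact mul_le_mul_of_nonneg_left (Nat.cast_le.2 (cycDiam_le_iff.1 le_rfl x hx y hy)) hc
  · obtain ⟨⟨x, y⟩, hxy, h⟩ := Finset.exists_mem_eq_sup (A ×ˢ A) (hne.product hne)
      fun p => cycDist n p.1 p.2
    obtain ⟨hx, hy⟩ := Finset.mem_product.1 hxy
    rw [cycDiam, h, ← dist_geoPoint (Finset.mem_range.1 (hA hx)) (Finset.mem_range.1 (hA hy))]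
    exact Metric.dist_le_diam_of_mem (A.finite_toSet.image _).isBounded
      (Set.mem_image_of_mem _ hx) (Set.mem_image_of_mem _ hy)

theorem ripsMag_geoCycle_eq_sum (n : ℕ) (t : ℝ) :
    ripsMag (geoCycle n) t = ∑ A ∈ (Finset.range n).powerset.filter (fun A => A.Nonempty),
      (-1 : ℝ) ^ (A.card - 1) * Real.exp (-(2 * π / n) * t) ^ cycDiam n A := by
  classical
  symm
  have hinj : ∀ A ⊆ Finset.range n, Set.InjOn (geoPoint n) (A : Set ℕ) := fun A hA =>
    (geoPoint_injOn n).mono (Finset.coe_subset.2 hA)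
  have hgeo : geoCycle n = (Finset.range n).image (geoPoint n) := by
    rw [geoCycle]
    ext x
    simp [geoPoint, Finset.bind_def, Finset.pure_def]
  rw [ripsMag, hgeo]
  refine Finset.sum_bij (fun A _ => A.image (geoPoint n)) ?_ ?_ ?_ ?_
  · intro A hA
    simp only [Finset.mem_filter, Finset.mem_powerset] at hA ⊢
    exact ⟨Finset.image_subset_image hA.1, hA.2.image _⟩
  · intro A hA B hB h
    simp only [Finset.mem_filter, Finset.mem_powerset] at hA hB
    have h' := congrArg (fun s : Finset _ => (s : Set (AddCircle (2 * π : ℝ)))) h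
    simp only [Finset.coe_image] at h'
    exact Finset.coe_injective (((geoPoint_injOn n).image_eq_image_iff
      (Finset.coe_subset.2 hA.1) (Finset.coe_subset.2 hB.1)).1 h')
  · intro B hB
    simp only [Finset.mem_filter, Finset.mem_powerset] at hB
    obtain ⟨A, hA, rfl⟩ := Finset.subset_image_iff.1 hB.1
    exact ⟨A, Finset.mem_filter.2 ⟨Finset.mem_powerset.2 (by exact_mod_cast hA),
      Finset.image_nonempty.1 hB.2⟩, rfl⟩
  · intro A hA
    simp only [Finset.mem_filter, Finset.mem_powerset] at hA
    rw [Finset.card_image_of_injOn (hinj A hA.1), Finset.coe_image,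
      diam_image_geoPoint hA.1 hA.2, ← Real.exp_nat_mul]
    ring_nf

/-- for `n ≥ 1` and `t > 0`,
`|tC_n^geo|_Rips = Σ_{odd r ∣ n, r ≠ n} (n/r)(e^{−η_r t} − e^{−η_{r,n} t}) + e^{−η_n t}`. -/
theorem ripsMag_geoCycle (n : ℕ) (hn : 1 ≤ n) (t : ℝ) (ht : 0 < t) :
    ripsMag (geoCycle n) t =
      (∑ r ∈ n.divisors.filter (fun r => Odd r ∧ r ≠ n),
        ((n / r : ℕ) : ℝ) * (Real.exp (-(etaG r) * t) - Real.exp (-(etaG2 r n) * t)))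
      + Real.exp (-(etaG n) * t) := by
  have hn0 : (n : ℝ) ≠ 0 := by exact_mod_cast (by omega : n ≠ 0)
  rw [ripsMag_geoCycle_eq_sum, sum_pow_cycDiam hn]
  congr 1
  · refine Finset.sum_congr rfl fun r hr => ?_
    have hrn := Nat.dvd_of_mem_divisors (Finset.mem_filter.1 hr).1
    have hr0 : (r : ℝ) ≠ 0 := by
      exact_mod_cast (Nat.pos_of_dvd_of_pos hrn (by omega)).ne'
    rw [← Real.exp_nat_mul, ← Real.exp_nat_mul]
    congr 3
    · rw [etaG, Nat.cast_mul, Nat.cast_div hrn hr0]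
      field_simp
    · rw [etaG2, Nat.cast_add, Nat.cast_mul, Nat.cast_div hrn hr0]
      field_simp
      push_cast
      ring
  · rw [← Real.exp_nat_mul, etaG]
    congr 1
    field_simp
end
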